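/- arXiv:0707.0593 — 2 statements merged into one kernel-verified Lean document; each statement's English description precedes it below -/
import Mathlib

section
/- Let $\beta = (1+\sqrt{5})/2$ and $L = \mathbb{Q}(\beta)$. The only solutions of the equation $X^4 + (8\beta - 12)X^3 + (16\beta - 30)X^2 + (8\beta - 12)X + 1 = Y^2$ with $X \in \mathbb{Q}$ and $Y \in L$ are $(X, Y) = (0, \pm 1)$. -/
/-!
Substituting `M = (X - 1) / (X + 1)` turns the equation into `y² = -M⁴ + (18 - 8ω) M² + (8ω - 13)`
with `M ∈ ℚ`, and the claim into `M² = 1`. A solution `y` makes the quadratic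
`N² - 4 (M² + ω) N + 3 (ω + 2) (M² - 1)²` split over `ℚ(√5)`, and each root `N` yields the point
with first coordinate `N / (M - 1)²` on the elliptic curve `E : Y² = X (X - 3) (X - (ω + 2))`.

For the root `N = 4 P` with `P` a `2`-adic unit, a `2`-descent on `E` and congruences modulo `8`
give `N = (2 e)²` with `e ≡ ω` modulo the inert prime `2`. Thus `a = 2 e / (M - 1)` lifts to one of
the covers `a² - 3 = ε b²`, `a² - (ω + 2) = ε c²` with `ε = ±1`. On the cover with `ε = 1`, halving
points decreases the `2`-adic size of the denominator of `a`, and this infinite descent determines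
the leading `2`-adic coefficient of `a`; since `M` is rational, it differs from that of
`2 e / (M - 1)`. Hence `ε = -1`, and `N - 3 (M - 1)²` is minus a nonzero square. Replacing `M` by
`-M`, so is `N - 3 (M + 1)²`; but the product of the two is minus a square as well, which the real
embeddings forbid.
-/

open QuadraticAlgebra
open scoped algebraMap goldenRatio

section PrincipalIdealRing

variable {R : Type*} [CommRing R] [IsDomain R] [IsPrincipalIdealRing R]

lemma exists_eq_mul_mul_sq_of_mul_eq_sq {a b c : R} (ha : a ≠ 0) (h : a * b = c ^ 2) :
    ∃ g e n : R, g ∣ a ∧ g ∣ b ∧ IsUnit e ∧ a = g * e * n ^ 2 := by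
  obtain ⟨r, s, hrs⟩ := IsBezout.gcd_eq_sum a b
  set g := IsBezout.gcd a b
  obtain ⟨a', ha'⟩ : g ∣ a := IsBezout.gcd_dvd_left a b
  obtain ⟨b', hb'⟩ : g ∣ b := IsBezout.gcd_dvd_right a b
  have hg : g ≠ 0 := fun h0 => ha (by rw [ha', h0, zero_mul])
  have hcop : IsCoprime a' b' := ⟨r, s, mul_left_cancel₀ hg (by
    linear_combination hrs - r * ha' - s * hb')⟩
  obtain ⟨c', hc'⟩ : g ∣ c := by
    rw [← IsIntegrallyClosed.pow_dvd_pow_iff two_ne_zero, ← h]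
    exact ⟨a' * b', by rw [ha', hb']; ring⟩
  have h' : a' * b' = c' ^ 2 := mul_left_cancel₀ (pow_ne_zero 2 hg) (by
    rw [ha', hb', hc'] at h
    linear_combination h)
  obtain ⟨n, e, hn⟩ := exists_associated_pow_of_mul_eq_pow' hcop h'
  exact ⟨g, e, n, ⟨a', ha'⟩, ⟨b', hb'⟩, e.isUnit, by rw [ha', ← hn]; ring⟩

lemma dvd_or_exists_eq_mul_of_dvd_prime_mul {p g k : R} (hp : Prime p) (h : g ∣ p * k) :
    g ∣ k ∨ ∃ g', g = p * g' ∧ g' ∣ k := by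
  by_cases hpg : p ∣ g
  · obtain ⟨g', rfl⟩ := hpg
    exact .inr ⟨g', rfl, (mul_dvd_mul_iff_left hp.ne_zero).1 h⟩
  · exact .inl ((hp.irreducible.coprime_iff_not_dvd.2 hpg).symm.dvd_of_dvd_mul_left h)

variable {K : Type*} [Field K] [Algebra R K] [IsFractionRing R K]

variable (R) in
lemma exists_isCoprime_eq_div (x : K) :
    ∃ p q : R, q ≠ 0 ∧ IsCoprime p q ∧ x = (p : K) / (q : K) := by
  obtain ⟨p, q, hpq, rfl⟩ := IsFractionRing.exists_reduced_fraction R x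
  exact ⟨p, q, nonZeroDivisors.ne_zero q.2, hpq.isCoprime, IsFractionRing.mk'_eq_div q⟩

lemma exists_coe_eq_of_sq_eq_coe {x : K} {r : R} (h : x ^ 2 = r) : ∃ z : R, (z : K) = x :=
  IsIntegrallyClosed.exists_algebraMap_eq_of_isIntegral_pow two_pos (h ▸ isIntegral_algebraMap)

end PrincipalIdealRing

lemma prime_of_ker_eq_span_singleton {R S : Type*} [CommRing R] [CommRing S] [IsDomain S]
    {f : R →+* S} {p : R} (hp : p ≠ 0) (h : RingHom.ker f = Ideal.span {p}) : Prime p := by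
  rw [← Ideal.span_singleton_prime hp, ← h]
  exact RingHom.ker_isPrime f

/-! ### The ring `ℤ[(1 + √5)/2]` and its field of fractions -/

/-- The ring `R[ω]` with `ω² = ω + 1`; it is `ℤ[(1 + √5)/2]` for `R = ℤ`. -/
abbrev GoldenRing (R : Type*) [Zero R] [One R] : Type _ := QuadraticAlgebra R 1 1

namespace GoldenRing

lemma omega_sq {R : Type*} [CommRing R] : (ω : GoldenRing R) ^ 2 = ω + 1 := by
  ext <;> simp [pow_two]

/-- Base change of `R[ω]` along a ring homomorphism. -/
def map {R S : Type*} [CommRing R] [CommRing S] (f : R →+* S) :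
    GoldenRing R →+* GoldenRing S where
  toFun z := ⟨f z.re, f z.im⟩
  map_one' := by ext <;> simp
  map_mul' x y := by ext <;> simp
  map_zero' := by ext <;> simp
  map_add' x y := by ext <;> simp

section map

variable {R S : Type*} [CommRing R] [CommRing S] (f : R →+* S)

@[simp] lemma re_map (z : GoldenRing R) : (map f z).re = f z.re := rfl

@[simp] lemma im_map (z : GoldenRing R) : (map f z).im = f z.im := rfl

@[simp] lemma map_omega : map f ω = ω := by ext <;> simp

end map

/-- The homomorphism `R[ω] →+* S` sending `ω` to a given root `θ` of `X² - X - 1`. -/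
def lift {R S : Type*} [CommRing R] [CommRing S] [Algebra R S] (θ : S) (hθ : θ ^ 2 = θ + 1) :
    GoldenRing R →+* S :=
  (QuadraticAlgebra.lift (R := R) (a := 1) (b := 1)
    ⟨θ, by rw [← pow_two, hθ, one_smul, one_smul, add_comm]⟩ : GoldenRing R →ₐ[R] S)

section lift

variable {R S : Type*} [CommRing R] [CommRing S] [Algebra R S] {θ : S} (hθ : θ ^ 2 = θ + 1)

lemma lift_apply (z : GoldenRing R) : lift θ hθ z = (z.re : S) + (z.im : S) * θ := by
  simp [lift, QuadraticAlgebra.lift, Algebra.smul_def, Algebra.cast]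

@[simp] lemma lift_omega : lift θ hθ (ω : GoldenRing R) = θ := by
  simp [lift_apply, Algebra.cast]

end lift

end GoldenRing

open GoldenRing

/-- The ring of integers `ℤ[(1 + √5)/2]` of `ℚ(√5)`. -/
abbrev GoldenInt : Type := GoldenRing ℤ

/-- The field `ℚ(√5)`, with `ℚ`-basis `1, ω = (1 + √5)/2`. -/
abbrev GoldenField : Type := GoldenRing ℚ

/-- The finite ring `ℤ[ω]/(n)`. -/
abbrev GoldenMod (n : ℕ) : Type := GoldenRing (ZMod n)

namespace GoldenField

instance : Fact (∀ r : ℚ, r ^ 2 ≠ 1 + 1 * r) where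
  out r hr := by
    have h5 : IsSquare (((5 : ℕ) : ℚ)) := ⟨2 * r - 1, by push_cast; linear_combination -4 * hr⟩
    rw [Rat.isSquare_natCast_iff] at h5
    exact Nat.prime_five.not_isSquare h5

instance : Algebra GoldenInt GoldenField := (map (Int.castRingHom ℚ)).toAlgebra

@[simp] lemma re_coe (z : GoldenInt) : (z : GoldenField).re = z.re := rfl

@[simp] lemma im_coe (z : GoldenInt) : (z : GoldenField).im = z.im := rfl

@[simp, norm_cast] lemma coe_omega : ((ω : GoldenInt) : GoldenField) = ω := by ext <;> simp

@[simp, norm_cast] lemma coe_ofNat (n : ℕ) [n.AtLeastTwo] :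
    ((ofNat(n) : GoldenInt) : GoldenField) = ofNat(n) :=
  map_ofNat (algebraMap GoldenInt GoldenField) n

@[simp, norm_cast] lemma coe_intCast (n : ℤ) : ((n : GoldenInt) : GoldenField) = n :=
  map_intCast (algebraMap GoldenInt GoldenField) n

lemma coe_injective : Function.Injective ((↑) : GoldenInt → GoldenField) := fun x y h => by
  simpa [QuadraticAlgebra.ext_iff] using h

instance : FaithfulSMul GoldenInt GoldenField :=
  (faithfulSMul_iff_algebraMap_injective _ _).2 coe_injective

instance : IsFractionRing GoldenInt GoldenField := IsFractionRing.of_field _ _ fun x => by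
  refine ⟨⟨x.re.num * x.im.den, x.im.num * x.re.den⟩, (x.re.den * x.im.den : ℕ), ?_⟩
  rw [map_natCast, eq_div_iff (by exact_mod_cast (mul_pos x.re.pos x.im.pos).ne')]
  have hre := x.re.mul_den_eq_num
  have him := x.im.mul_den_eq_num
  ext
  · simp only [re_mul, re_natCast, im_natCast, mul_zero, add_zero, RingHom.algebraMap_toAlgebra,
      re_map, eq_intCast, Int.cast_mul, Int.cast_natCast]
    push_cast
    linear_combination (x.im.den : ℚ) * hre
  · simp only [im_mul, re_natCast, im_natCast, mul_zero, zero_add, RingHom.algebraMap_toAlgebra,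
      im_map, eq_intCast, Int.cast_mul, Int.cast_natCast]
    push_cast
    linear_combination (x.re.den : ℚ) * him

lemma norm_coe (z : GoldenInt) : (z : GoldenField).norm = z.norm := by
  simp [norm_def]

end GoldenField

open GoldenField

namespace GoldenInt

instance : IsDomain GoldenInt := GoldenField.coe_injective.isDomain (algebraMap _ GoldenField)

lemma norm_ne_zero {z : GoldenInt} (hz : z ≠ 0) : z.norm ≠ 0 := by
  rw [← Int.cast_ne_zero (α := ℚ), ← norm_coe, Ne, norm_eq_zero_iff_eq_zero]
  exact_mod_cast hz

/-- A golden integer close to `x`, obtained by rounding both coordinates. -/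
def nearest (x : GoldenField) : GoldenInt := ⟨round x.re, round x.im⟩

lemma abs_norm_sub_nearest_lt_one (x : GoldenField) : |(x - nearest x).norm| < 1 := by
  have h1 : |x.re - round x.re| ≤ 1 / 2 := abs_sub_round _
  have h2 : |x.im - round x.im| ≤ 1 / 2 := abs_sub_round _
  simp only [norm_def, re_sub, im_sub, re_coe, im_coe, nearest]
  rw [abs_le] at h1 h2
  rw [abs_lt]
  constructor <;> nlinarith

lemma natAbs_norm_sub_mul_nearest_lt (x : GoldenInt) {y : GoldenInt} (hy : y ≠ 0) :
    (x - y * nearest (x / y : GoldenField)).norm.natAbs < y.norm.natAbs := by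
  have hy' : (y : GoldenField) ≠ 0 := by exact_mod_cast hy
  set q := nearest (x / y : GoldenField)
  have key : ((x - y * q : GoldenInt) : GoldenField) = y * (x / y - q) := by
    push_cast; field_simp
  zify
  rw [← Int.cast_lt (R := ℚ), Int.cast_abs, Int.cast_abs, ← norm_coe, ← norm_coe, key, map_mul,
    abs_mul]
  refine mul_lt_of_lt_one_right (abs_pos.2 ?_) (abs_norm_sub_nearest_lt_one _)
  rwa [Ne, norm_eq_zero_iff_eq_zero]

/-- Division with remainder in `ℤ[ω]`, rounding the exact quotient to the nearest integer. -/
noncomputable abbrev euclideanDomain : EuclideanDomain GoldenInt where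
  quotient x y := nearest (x / y : GoldenField)
  remainder x y := x - y * nearest (x / y : GoldenField)
  quotient_zero x := by ext <;> simp [nearest]
  quotient_mul_add_remainder_eq x y := by ring
  r x y := x.norm.natAbs < y.norm.natAbs
  r_wellFounded := (measure fun z : GoldenInt => z.norm.natAbs).wf
  remainder_lt x _ hy := natAbs_norm_sub_mul_nearest_lt x hy
  mul_left_not_lt x y hy := by
    rw [map_mul, Int.natAbs_mul, not_lt]
    exact Nat.le_mul_of_pos_right _ (Int.natAbs_pos.2 (norm_ne_zero hy))

instance : IsPrincipalIdealRing GoldenInt := euclideanDomain.to_principal_ideal_domain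

/-- The fundamental unit of `ℤ[ω]`. -/
def omegaUnit : GoldenIntˣ where
  val := ω
  inv := ω - 1
  val_inv := by linear_combination omega_sq (R := ℤ)
  inv_val := by linear_combination omega_sq (R := ℤ)

/-- The real embedding of `ℤ[ω]` with `ω ↦ (1 + √5)/2`. -/
noncomputable def toReal : GoldenInt →+* ℝ := lift φ Real.goldenRatio_sq

/-- The real embedding of `ℤ[ω]` with `ω ↦ (1 - √5)/2`. -/
noncomputable def toRealConj : GoldenInt →+* ℝ := lift ψ Real.goldenConj_sq

lemma toReal_mul_toRealConj (z : GoldenInt) : toReal z * toRealConj z = z.norm := by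
  simp only [toReal, toRealConj, lift_apply, norm_def, Algebra.cast, eq_intCast]
  push_cast
  linear_combination (z.re * z.im : ℝ) * Real.goldenRatio_add_goldenConj +
    (z.im : ℝ) ^ 2 * Real.goldenRatio_mul_goldenConj

lemma eq_one_of_mem_Ico {z : GoldenInt} (hz : IsUnit z) (h : toReal z ∈ Set.Ico 1 φ) : z = 1 := by
  have hconj : |toRealConj z| ≤ 1 := by
    rw [isUnit_iff_norm_isUnit, Int.isUnit_iff_abs_eq] at hz
    have hnorm : |toReal z| * |toRealConj z| = 1 := by
      rw [← abs_mul, toReal_mul_toRealConj, ← Int.cast_abs, hz, Int.cast_one]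
    exact hnorm ▸ le_mul_of_one_le_left (abs_nonneg _) (h.1.trans (le_abs_self _))
  obtain ⟨a, b⟩ := z
  obtain ⟨h1, h2⟩ := h
  obtain ⟨h3, h4⟩ := abs_le.1 hconj
  simp only [toReal, toRealConj, lift_apply, Algebra.cast, eq_intCast] at h1 h2 h3 h4
  have hφ := Real.one_lt_goldenRatio
  have hφ2 := Real.goldenRatio_lt_two
  have hψ := Real.goldenRatio_add_goldenConj
  have hb_lower : -1 < b := by
    by_contra! hb
    have : (b : ℝ) ≤ -1 := by exact_mod_cast hb
    nlinarith
  have hb_upper : b < 2 := by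
    by_contra! hb
    have : (2 : ℝ) ≤ b := by exact_mod_cast hb
    nlinarith
  obtain rfl | rfl : b = 0 ∨ b = 1 := by omega
  · have ha_lower : (0 : ℝ) < a := by push_cast at h1; linarith
    have ha_upper : (a : ℝ) < 2 := by push_cast at h2; linarith
    norm_cast at ha_lower ha_upper
    obtain rfl : a = 1 := by omega
    rfl
  · have ha_lower : (-1 : ℝ) < a := by push_cast at h1; linarith
    have ha_upper : (a : ℝ) < 0 := by push_cast at h2; linarith
    norm_cast at ha_lower ha_upper
    omega

lemma toReal_omegaUnit_zpow (n : ℤ) : toReal (omegaUnit ^ n : GoldenIntˣ) = φ ^ n := by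
  have h : (Units.map (toReal : GoldenInt →* ℝ) omegaUnit : ℝ) = φ := lift_omega Real.goldenRatio_sq
  rw [← h, ← Units.val_zpow_eq_zpow_val, ← map_zpow]
  rfl

theorem exists_eq_omegaUnit_zpow (e : GoldenIntˣ) :
    ∃ n : ℤ, e = omegaUnit ^ n ∨ e = -omegaUnit ^ n := by
  wlog he : 0 < toReal e generalizing e
  · obtain ⟨n, hn⟩ := this (-e) (by
      have := (e.isUnit.map toReal).ne_zero
      rw [Units.val_neg, map_neg]
      exact neg_pos.2 (lt_of_le_of_ne (not_lt.1 he) this))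
    exact ⟨n, by rwa [neg_inj, neg_eq_iff_eq_neg, or_comm] at hn⟩
  obtain ⟨n, hn1, hn2⟩ := exists_mem_Ico_zpow he Real.one_lt_goldenRatio
  have hφ : 0 < φ ^ n := zpow_pos Real.goldenRatio_pos n
  have h1 : ((e * omegaUnit ^ (-n) : GoldenIntˣ) : GoldenInt) = 1 := by
    refine eq_one_of_mem_Ico (Units.isUnit _) ?_
    rw [Units.val_mul, map_mul, toReal_omegaUnit_zpow, zpow_neg, ← div_eq_mul_inv]
    rw [zpow_add_one₀ Real.goldenRatio_ne_zero, mul_comm] at hn2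
    exact ⟨(one_le_div hφ).2 hn1, (div_lt_iff₀ hφ).2 hn2⟩
  exact ⟨n, .inl (by rwa [zpow_neg, Units.val_eq_one, mul_inv_eq_one] at h1)⟩

/-- Representatives of the units of `ℤ[ω]` modulo squares. -/
def unitReps : Set GoldenInt := {1, -1, ω, -ω}

lemma exists_eq_mul_sq_of_isUnit {e : GoldenInt} (he : IsUnit e) :
    ∃ k ∈ unitReps, ∃ n, e = k * n ^ 2 := by
  obtain ⟨e, rfl⟩ := he
  obtain ⟨n, hn⟩ := exists_eq_omegaUnit_zpow e
  obtain ⟨m, hm⟩ := Int.even_or_odd' n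
  have hsq : ((omegaUnit ^ (2 * m) : GoldenIntˣ) : GoldenInt) =
      ((omegaUnit ^ m : GoldenIntˣ) : GoldenInt) ^ 2 := by
    rw [mul_comm, zpow_mul]; rfl
  have hω : ((omegaUnit ^ (2 * m + 1) : GoldenIntˣ) : GoldenInt) =
      ω * ((omegaUnit ^ m : GoldenIntˣ) : GoldenInt) ^ 2 := by
    rw [zpow_add_one, Units.val_mul, hsq, mul_comm]; rfl
  rcases hm with rfl | rfl <;> rcases hn with rfl | rfl
  · exact ⟨1, by simp [unitReps], _, by rw [hsq, one_mul]⟩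
  · exact ⟨-1, by simp [unitReps], _, by rw [Units.val_neg, hsq, neg_one_mul]⟩
  · exact ⟨ω, by simp [unitReps], _, hω⟩
  · exact ⟨-ω, by simp [unitReps], _, by rw [Units.val_neg, hω, neg_mul]⟩

end GoldenInt

namespace GoldenMod

instance (n : ℕ) [NeZero n] : Fintype (GoldenMod n) :=
  .ofEquiv _ (QuadraticAlgebra.equivProd 1 1).symm

instance : Fact (∀ r : ZMod 2, r ^ 2 ≠ 1 + 1 * r) := ⟨by decide⟩

end GoldenMod

namespace GoldenInt

/-- Reduction modulo `n` on `ℤ[ω]`. -/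
def toMod (n : ℕ) : GoldenInt →+* GoldenMod n := map (Int.castRingHom (ZMod n))

@[simp] lemma toMod_omega (n : ℕ) : toMod n ω = ω := map_omega _

lemma ker_toMod (n : ℕ) : RingHom.ker (toMod n) = Ideal.span {(n : GoldenInt)} := by
  ext z
  have h : ((n : ℤ) : GoldenInt) ∣ z ↔ (n : ℤ) ∣ z.re ∧ (n : ℤ) ∣ z.im :=
    QuadraticAlgebra.algebraMap_dvd_iff
  rw [RingHom.mem_ker, Ideal.mem_span_singleton, ← Int.cast_natCast, h,
    ← ZMod.intCast_zmod_eq_zero_iff_dvd, ← ZMod.intCast_zmod_eq_zero_iff_dvd,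
    QuadraticAlgebra.ext_iff]
  rfl

lemma toMod_eq_zero_iff {n : ℕ} {z : GoldenInt} : toMod n z = 0 ↔ (n : GoldenInt) ∣ z := by
  rw [← RingHom.mem_ker, ker_toMod, Ideal.mem_span_singleton]

lemma prime_natCast {p : ℕ} [Fact p.Prime] (h : ∀ r : ZMod p, r ^ 2 ≠ 1 + 1 * r) :
    Prime (p : GoldenInt) :=
  have : Fact (∀ r : ZMod p, r ^ 2 ≠ 1 + 1 * r) := ⟨h⟩
  prime_of_ker_eq_span_singleton (Nat.cast_ne_zero.2 (Fact.out : p.Prime).ne_zero) (ker_toMod p)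

lemma prime_two : Prime (2 : GoldenInt) := prime_natCast (p := 2) (by decide)

lemma prime_three : Prime (3 : GoldenInt) := prime_natCast (p := 3) (by decide)

/-- Reduction modulo the ramified prime `(ω + 2)` above `5`. -/
def toZModFive : GoldenInt →+* ZMod 5 := lift 3 (by decide)

lemma ker_toZModFive : RingHom.ker toZModFive = Ideal.span {(ω + 2 : GoldenInt)} := by
  ext z
  rw [RingHom.mem_ker, Ideal.mem_span_singleton]
  constructor
  · intro h
    have h' : ((z.re + z.im * 3 : ℤ) : ZMod 5) = 0 := by
      push_cast; exact h ▸ (lift_apply _ z).symm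
    obtain ⟨k, hk⟩ := (ZMod.intCast_zmod_eq_zero_iff_dvd _ 5).1 h'
    refine ⟨⟨3 * (k - z.im) + z.im, -(k - z.im)⟩, ?_⟩
    push_cast at hk
    ext <;> simp <;> linarith
  · rintro ⟨w, rfl⟩
    rw [map_mul, show toZModFive (ω + 2) = 0 by
      rw [toZModFive, map_add, lift_omega, map_ofNat]; decide, zero_mul]

lemma toZModFive_eq_zero_iff {z : GoldenInt} : toZModFive z = 0 ↔ ω + 2 ∣ z := by
  rw [← RingHom.mem_ker, ker_toZModFive, Ideal.mem_span_singleton]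

lemma prime_omega_add_two : Prime (ω + 2 : GoldenInt) :=
  have : Fact (Nat.Prime 5) := ⟨Nat.prime_five⟩
  prime_of_ker_eq_span_singleton (fun h => by simpa using congrArg QuadraticAlgebra.im h)
    ker_toZModFive

/-! ### The `2`-descent -/

/-- The square classes `{1, 3, ω + 2, 3 (ω + 2)}` of `ℤ[ω]` that arise as the first coordinate of
the `2`-descent map of `y² = x (x - 3) (x - (ω + 2))` at the four `2`-torsion points. -/
def torsionReps : Set GoldenInt := {1, 3, ω + 2, 3 * (ω + 2)}

lemma exists_eq_mul_unit_of_dvd {g : GoldenInt} (hg : g ∣ 3 * (ω + 2)) :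
    ∃ d ∈ torsionReps, ∃ e, IsUnit e ∧ g = d * e := by
  rw [← mul_one (ω + 2)] at hg
  rcases dvd_or_exists_eq_mul_of_dvd_prime_mul prime_three hg with hg' | ⟨g', rfl, hg'⟩ <;>
  rcases dvd_or_exists_eq_mul_of_dvd_prime_mul prime_omega_add_two hg' with h | ⟨g'', rfl, h⟩
  · exact ⟨1, by simp [torsionReps], g, isUnit_of_dvd_one h, by ring⟩
  · exact ⟨ω + 2, by simp [torsionReps], g'', isUnit_of_dvd_one h, by ring⟩
  · exact ⟨3, by simp [torsionReps], g', isUnit_of_dvd_one h, by ring⟩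
  · exact ⟨3 * (ω + 2), by simp [torsionReps], g'', isUnit_of_dvd_one h, by ring⟩

/-- The integral form of the `2`-descent on `y² = x (x - 3) (x - (ω + 2))` with `x = r / t`. -/
lemma exists_mul_eq_mul_sq_of_curve {r t c : GoldenInt} (hrt : IsCoprime r t) (hr : r ≠ 0)
    (ht : t ≠ 0) (h : r * t * ((r - 3 * t) * (r - (ω + 2) * t)) = c ^ 2) :
    ∃ k ∈ unitReps, ∃ d ∈ torsionReps, ∃ n, r * t = k * d * n ^ 2 := by
  obtain ⟨g, e, n, hg1, hg2, he, hn⟩ :=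
    exists_eq_mul_mul_sq_of_mul_eq_sq (mul_ne_zero hr ht) h
  have hgt : IsCoprime g t := by
    refine IsCoprime.of_isCoprime_of_dvd_left ?_ hg2
    rw [show (r - 3 * t) * (r - (ω + 2) * t) =
      r ^ 2 + t * (-3 * r - (ω + 2) * r + 3 * (ω + 2) * t) by ring]
    exact hrt.pow_left.add_mul_left_left _
  have hgr : g ∣ r := hgt.dvd_of_dvd_mul_right hg1
  have hg : g ∣ 3 * (ω + 2) := by
    refine (hgt.pow_right (n := 2)).dvd_of_dvd_mul_right ?_
    rw [show 3 * (ω + 2) * t ^ 2 =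
      (r - 3 * t) * (r - (ω + 2) * t) - r * (r - 3 * t - (ω + 2) * t) by ring]
    exact dvd_sub hg2 (hgr.mul_right _)
  obtain ⟨d, hd, e', he', rfl⟩ := exists_eq_mul_unit_of_dvd hg
  obtain ⟨k, hk, m, hm⟩ := exists_eq_mul_sq_of_isUnit (he'.mul he)
  exact ⟨k, hk, d, hd, m * n, by linear_combination hn + d * n ^ 2 * hm⟩

end GoldenInt

open GoldenInt

namespace GoldenField

lemma exists_eq_unit_mul_sq_of_curve {x y : GoldenField} (hx : x ≠ 0)
    (h : y ^ 2 = x * (x - 3) * (x - (ω + 2))) :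
    ∃ k ∈ unitReps, ∃ d ∈ torsionReps, ∃ n : GoldenField, x = k * d * n ^ 2 := by
  obtain ⟨r, t, ht, hrt, rfl⟩ := exists_isCoprime_eq_div GoldenInt x
  have ht' : (t : GoldenField) ≠ 0 := by exact_mod_cast ht
  have hr : r ≠ 0 := fun h0 => hx (by rw [h0, algebraMap.coe_zero, zero_div])
  obtain ⟨c, hc⟩ := exists_coe_eq_of_sq_eq_coe
    (x := y * (t : GoldenField) ^ 2) (r := r * t * ((r - 3 * t) * (r - (ω + 2) * t))) (by
      rw [mul_pow, h]; push_cast; field_simp)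
  have hc' : r * t * ((r - 3 * t) * (r - (ω + 2) * t)) = c ^ 2 := coe_injective (by
    push_cast; rw [hc, mul_pow, h]; field_simp)
  obtain ⟨k, hk, d, hd, n, hn⟩ := exists_mul_eq_mul_sq_of_curve hrt hr ht hc'
  refine ⟨k, hk, d, hd, n / t, ?_⟩
  have hn' : (r * t : GoldenField) = k * d * n ^ 2 := by exact_mod_cast hn
  field_simp
  exact hn'

lemma pos_of_curve (f : GoldenField →+* ℝ) (hf : 0 < f ω + 2) {x y : GoldenField} (hy : y ≠ 0)
    (h : y ^ 2 = x * (x - 3) * (x - (ω + 2))) : 0 < f x := by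
  have hy' : 0 < f y ^ 2 := even_two.pow_pos ((map_ne_zero f).2 hy)
  rw [← map_pow, h] at hy'
  simp only [map_mul, map_sub, map_add, map_ofNat] at hy'
  by_contra! hx
  have := mul_nonneg_of_nonpos_of_nonpos (a := f x - 3) (b := f x - (f ω + 2))
    (by linarith) (by linarith)
  nlinarith

lemma pos_of_mem_torsionReps (f : GoldenField →+* ℝ) (hf : 0 < f ω + 2) {d : GoldenInt}
    (hd : d ∈ torsionReps) : 0 < f d := by
  rcases hd with rfl | rfl | rfl | rfl <;> push_cast <;>
    simp only [map_mul, map_add, map_one, map_ofNat] <;> linarith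

/-- The units `-1`, `ω` and `-ω` are excluded by the signs at the two real places. -/
theorem exists_eq_mul_sq_of_curve {x y : GoldenField} (hy : y ≠ 0)
    (h : y ^ 2 = x * (x - 3) * (x - (ω + 2))) :
    ∃ d ∈ torsionReps, ∃ n : GoldenField, x = d * n ^ 2 := by
  have hx : x ≠ 0 := by rintro rfl; simp [hy] at h
  obtain ⟨k, hk, d, hd, n, hn⟩ := exists_eq_unit_mul_sq_of_curve hx h
  have hpos (f : GoldenField →+* ℝ) (hf : 0 < f ω + 2) : 0 < f k := by
    have hx := pos_of_curve f hf hy h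
    rw [hn, map_mul, map_pow, map_mul] at hx
    exact pos_of_mul_pos_left (pos_of_mul_pos_left hx (sq_nonneg _))
      (pos_of_mem_torsionReps f hf hd).le
  have hφ := hpos (lift φ Real.goldenRatio_sq)
  have hψ := hpos (lift ψ Real.goldenConj_sq)
  rw [lift_omega] at hφ hψ
  replace hφ := hφ (by linarith [Real.goldenRatio_pos])
  replace hψ := hψ (by linarith [Real.neg_one_lt_goldenConj])
  refine ⟨d, hd, n, ?_⟩
  rcases hk with rfl | rfl | rfl | rfl
  · simpa using hn
  · rw [algebraMap.coe_neg, algebraMap.coe_one, map_neg, map_one] at hφ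
    linarith
  · rw [coe_omega, lift_omega] at hψ
    linarith [Real.goldenConj_neg]
  · rw [algebraMap.coe_neg, coe_omega, map_neg, lift_omega] at hφ
    linarith [Real.goldenRatio_pos]

end GoldenField

/-! ### The covering curves and halving -/

namespace GoldenInt

/-- `(p / q, r / q, s / q)` is a point, in lowest terms, of the curve
`a² - 3 = ε b²`, `a² - (ω + 2) = ε c²`, which covers `y² = x (x - 3) (x - (ω + 2))`
through `x = a²`, `y = a b c`. -/
structure IsCoverPoint (ε p q r s : GoldenInt) : Prop where
  isCoprime : IsCoprime p q
  ne_zero : q ≠ 0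
  sq_sub_three_mul_sq : p ^ 2 - 3 * q ^ 2 = ε * r ^ 2
  sq_sub_omega_add_two_mul_sq : p ^ 2 - (ω + 2) * q ^ 2 = ε * s ^ 2

section CoverDescent

variable {p q : GoldenInt} (hpq : IsCoprime p q)
include hpq

lemma isUnit_of_dvd_quadratic_forms {g : GoldenInt} (h3 : g ∣ p ^ 2 - 3 * q ^ 2)
    (hω : g ∣ p ^ 2 - (ω + 2) * q ^ 2) : IsUnit g := by
  have hq : g ∣ q ^ 2 := by
    rw [show q ^ 2 = ω * ((p ^ 2 - 3 * q ^ 2) - (p ^ 2 - (ω + 2) * q ^ 2)) by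
      linear_combination -q ^ 2 * omega_sq (R := ℤ)]
    exact (dvd_sub h3 hω).mul_left _
  have hp : g ∣ p ^ 2 := by
    rw [show p ^ 2 = (p ^ 2 - 3 * q ^ 2) + 3 * q ^ 2 by ring]
    exact dvd_add h3 (hq.mul_left _)
  exact (IsCoprime.pow hpq).isUnit_of_dvd' hp hq

lemma exists_unit_mul_sq_of_quadratic_forms {c : GoldenInt} (hc : c ≠ 0)
    (h : (p ^ 2 - 3 * q ^ 2) * (p ^ 2 - (ω + 2) * q ^ 2) = c ^ 2) :
    ∃ k ∈ unitReps, ∃ r s, c = r * s ∧ p ^ 2 - 3 * q ^ 2 = k * r ^ 2 ∧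
      k * (p ^ 2 - (ω + 2) * q ^ 2) = s ^ 2 := by
  have h0 : p ^ 2 - 3 * q ^ 2 ≠ 0 := fun h0 => hc (by simpa [h0] using h.symm)
  obtain ⟨g, e, n, hg3, hgω, he, hn⟩ := exists_eq_mul_mul_sq_of_mul_eq_sq h0 h
  have hg := isUnit_of_dvd_quadratic_forms hpq hg3 hgω
  obtain ⟨k, hk, m, hm⟩ := exists_eq_mul_sq_of_isUnit (hg.mul he)
  have hr : p ^ 2 - 3 * q ^ 2 = k * (m * n) ^ 2 := by rw [hn, hm]; ring
  have hmn : m * n ≠ 0 := fun h => h0 (by rw [hr, h]; ring)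
  obtain ⟨s, hs⟩ : m * n ∣ c := by
    rw [← IsIntegrallyClosed.pow_dvd_pow_iff two_ne_zero, ← h, hr]
    exact ⟨k * (p ^ 2 - (ω + 2) * q ^ 2), by ring⟩
  refine ⟨k, hk, m * n, s, hs, hr, mul_left_cancel₀ (pow_ne_zero 2 hmn) ?_⟩
  rw [hr, hs] at h
  linear_combination h

/-- `±ω` are not squares modulo the prime `ω + 2` above `5`. -/
lemma eq_one_or_neg_one_of_unit_mul_eq_sq {k s : GoldenInt} (hk : k ∈ unitReps)
    (h : k * (p ^ 2 - (ω + 2) * q ^ 2) = s ^ 2) : k = 1 ∨ k = -1 := by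
  by_contra! hk1
  have hk5 : toZModFive k = 3 ∨ toZModFive k = -3 := by
    rcases hk with rfl | rfl | rfl | rfl <;> simp_all [toZModFive]
  have hmod := congrArg toZModFive h
  simp only [map_mul, map_sub, map_pow, toZModFive_eq_zero_iff.2 (dvd_refl (ω + 2))] at hmod
  have hps : toZModFive p = 0 ∧ toZModFive s = 0 := by
    generalize toZModFive p = p, toZModFive q = q, toZModFive s = s, toZModFive k = k at *
    revert p q s k; decide
  obtain ⟨p', hp'⟩ := toZModFive_eq_zero_iff.1 hps.1
  obtain ⟨s', hs'⟩ := toZModFive_eq_zero_iff.1 hps.2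
  have hp5 := prime_omega_add_two
  have hkq : ω + 2 ∣ k * q ^ 2 := ⟨k * p' ^ 2 - s' ^ 2,
    mul_left_cancel₀ hp5.ne_zero (by rw [hp', hs'] at h; linear_combination -h)⟩
  rcases hp5.dvd_or_dvd hkq with hk | hq
  · rw [← toZModFive_eq_zero_iff] at hk
    rw [hk] at hk5
    exact absurd hk5 (by decide)
  · exact hp5.not_isUnit (hpq.isUnit_of_dvd' ⟨p', hp'⟩ (hp5.dvd_of_dvd_pow hq))

lemma exists_isCoverPoint_of_quadratic_forms {c : GoldenInt} (hq : q ≠ 0) (hc : c ≠ 0)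
    (h : (p ^ 2 - 3 * q ^ 2) * (p ^ 2 - (ω + 2) * q ^ 2) = c ^ 2) :
    ∃ ε r s, (ε = 1 ∨ ε = -1) ∧ IsCoverPoint ε p q r s ∧ c = r * s := by
  obtain ⟨k, hk, r, s, hrs, hr, hs⟩ := exists_unit_mul_sq_of_quadratic_forms hpq hc h
  have hk1 := eq_one_or_neg_one_of_unit_mul_eq_sq hpq hk hs
  have hkk : k ^ 2 = 1 := by rcases hk1 with rfl | rfl <;> norm_num
  exact ⟨k, r, s, hk1, ⟨hpq, hq, hr, by linear_combination k * hs -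
    (p ^ 2 - (ω + 2) * q ^ 2) * hkk⟩, hrs⟩

end CoverDescent

end GoldenInt

namespace GoldenField

lemma exists_isCoverPoint {a y : GoldenField} (hy : y ≠ 0)
    (h : (a ^ 2 - 3) * (a ^ 2 - (ω + 2)) = y ^ 2) :
    ∃ ε p q r s : GoldenInt, (ε = 1 ∨ ε = -1) ∧ IsCoverPoint ε p q r s ∧
      a = p / q ∧ y = r * s / q ^ 2 := by
  obtain ⟨p, q, hq, hpq, rfl⟩ := exists_isCoprime_eq_div GoldenInt a
  have hq' : (q : GoldenField) ≠ 0 := by exact_mod_cast hq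
  obtain ⟨c, hc⟩ := exists_coe_eq_of_sq_eq_coe (x := y * (q : GoldenField) ^ 2)
    (r := (p ^ 2 - 3 * q ^ 2) * (p ^ 2 - (ω + 2) * q ^ 2)) (by
      rw [mul_pow, ← h]; push_cast; field_simp)
  have hc0 : c ≠ 0 := by
    rintro rfl
    simp [hy, hq] at hc
  obtain ⟨ε, r, s, hε, hrs, rfl⟩ := exists_isCoverPoint_of_quadratic_forms hpq hq hc0
    (coe_injective (by push_cast; rw [hc, mul_pow, ← h]; field_simp))
  exact ⟨ε, p, q, r, s, hε, hrs, rfl, by rw [eq_div_iff (pow_ne_zero 2 hq'), ← hc]; push_cast; rfl⟩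

section Halving

variable {u v w : GoldenField} (hv : u ^ 2 - 3 = v ^ 2) (hw : u ^ 2 - (ω + 2) = w ^ 2)
include hv hw

/-- `((u + v) (u + w), (u + v) (u + w) (v + w))` is a point whose double has `x = u²`. -/
lemma sum_products_on_curve : ((u + v) * (u + w) * (v + w)) ^ 2 =
    (u + v) * (u + w) * ((u + v) * (u + w) - 3) * ((u + v) * (u + w) - (ω + 2)) := by
  have h3 : (u + v) * (u + w) - 3 = (u + v) * (v + w) := by linear_combination hv
  have hω : (u + v) * (u + w) - (ω + 2) = (u + w) * (v + w) := by linear_combination hw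
  rw [h3, hω]; ring

lemma sum_products_ne_zero : u + v ≠ 0 ∧ u + w ≠ 0 ∧ v + w ≠ 0 := by
  refine ⟨fun h => ?_, fun h => ?_, fun h => ?_⟩
  · have h3 : (3 : GoldenField) = 0 := by linear_combination (u - v) * h - hv
    simp at h3
  · have h2 : (ω + 2 : GoldenField) = 0 := by linear_combination (u - w) * h - hw
    simpa using congrArg QuadraticAlgebra.im h2
  · have h1 : (ω - 1 : GoldenField) = 0 := by linear_combination (v - w) * h + hv - hw
    simpa using congrArg QuadraticAlgebra.im h1

/-- Changing the signs of `v` and `w` translates the point by a `2`-torsion point. -/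
lemma exists_signs_sum_products_eq_sq : ∃ v' w' a : GoldenField,
    v' ^ 2 = v ^ 2 ∧ w' ^ 2 = w ^ 2 ∧ (u + v') * (u + w') = a ^ 2 := by
  obtain ⟨huv, huw, hvw⟩ := sum_products_ne_zero hv hw
  obtain ⟨d, hd, n, hn⟩ := exists_eq_mul_sq_of_curve
    (mul_ne_zero (mul_ne_zero huv huw) hvw) (sum_products_on_curve hv hw)
  rcases hd with rfl | rfl | rfl | rfl <;> push_cast at hn
  · exact ⟨v, w, n, rfl, rfl, by linear_combination hn⟩
  · refine ⟨-v, w, 3 * n / (u + v), neg_sq v, rfl, ?_⟩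
    field_simp
    linear_combination (u + w) * (u + v) * hv + 3 * hn
  · refine ⟨v, -w, (ω + 2) * n / (u + w), rfl, neg_sq w, ?_⟩
    field_simp
    linear_combination (u + w) * (u + v) * hw + (ω + 2) * hn
  · refine ⟨-v, -w, 3 * (ω + 2) * n / ((u + v) * (u + w)), neg_sq v, neg_sq w, ?_⟩
    field_simp
    linear_combination (u + v) * (u + w) * ((u ^ 2 - w ^ 2) * hv + 3 * hw) + 3 * (ω + 2) * hn

lemma exists_isCoverPoint_of_sum_products_eq_sq {a : GoldenField}
    (ha : (u + v) * (u + w) = a ^ 2) :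
    ∃ ε p q r s : GoldenInt, (ε = 1 ∨ ε = -1) ∧ IsCoverPoint ε p q r s ∧
      2 * u * (p * q * r * s : GoldenInt) = (p ^ 4 - 3 * (ω + 2) * q ^ 4 : GoldenInt) := by
  obtain ⟨huv, huw, hvw⟩ := sum_products_ne_zero hv hw
  have ha0 : a ≠ 0 := by rintro rfl; simp [huv, huw] at ha
  have h3 : a ^ 2 - 3 = (u + v) * (v + w) := by linear_combination hv - ha
  have hω : a ^ 2 - (ω + 2) = (u + w) * (v + w) := by linear_combination hw - ha
  obtain ⟨ε, p, q, r, s, hε, hcov, hpq, hrs⟩ := exists_isCoverPoint (mul_ne_zero ha0 hvw)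
    (by rw [h3, hω]; linear_combination (v + w) ^ 2 * ha)
  refine ⟨ε, p, q, r, s, hε, hcov, ?_⟩
  have hq : (q : GoldenField) ≠ 0 := by exact_mod_cast hcov.ne_zero
  have key : 2 * u * a * (a * (v + w)) = a ^ 4 - 3 * (ω + 2) := by
    linear_combination ((u + v) * (u + w) + a ^ 2 - 2 * u * (v + w)) * ha -
      (u ^ 2 - w ^ 2) * hv - 3 * hw
  rw [hrs, hpq] at key
  push_cast
  field_simp at key
  linear_combination key

end Halving

end GoldenField

theorem GoldenInt.IsCoverPoint.exists_halving {p q r s : GoldenInt} (h : IsCoverPoint 1 p q r s) :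
    ∃ ε p' q' r' s' : GoldenInt, (ε = 1 ∨ ε = -1) ∧ IsCoverPoint ε p' q' r' s' ∧
      2 * p * (p' * q' * r' * s') = q * (p' ^ 4 - 3 * (ω + 2) * q' ^ 4) := by
  have hq : (q : GoldenField) ≠ 0 := by exact_mod_cast h.ne_zero
  have hv : (p / q : GoldenField) ^ 2 - 3 = (r / q : GoldenField) ^ 2 := by
    have hr := congrArg ((↑) : GoldenInt → GoldenField) h.sq_sub_three_mul_sq
    push_cast at hr
    field_simp
    linear_combination hr
  have hw : (p / q : GoldenField) ^ 2 - (ω + 2) = (s / q : GoldenField) ^ 2 := by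
    have hs := congrArg ((↑) : GoldenInt → GoldenField) h.sq_sub_omega_add_two_mul_sq
    push_cast at hs
    field_simp
    linear_combination hs
  obtain ⟨v, w, a, hv', hw', ha⟩ := exists_signs_sum_products_eq_sq hv hw
  obtain ⟨ε, p', q', r', s', hε, h', hrel⟩ :=
    exists_isCoverPoint_of_sum_products_eq_sq (hv.trans hv'.symm) (hw.trans hw'.symm) ha
  refine ⟨ε, p', q', r', s', hε, h', coe_injective ?_⟩
  push_cast at hrel ⊢
  field_simp at hrel
  linear_combination hrel

/-! ### The `2`-adic infinite descent -/

lemma eq_and_eq_of_pow_mul_eq_pow_mul {R : Type*} [CommRing R] [IsDomain R] {π x y : R}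
    (hπ : Prime π) (hx : ¬π ∣ x) (hy : ¬π ∣ y) {m n : ℕ} (h : π ^ m * x = π ^ n * y) :
    m = n ∧ x = y := by
  have hle {x y : R} {m n : ℕ} (hy : ¬π ∣ y) (h : π ^ m * x = π ^ n * y) : m ≤ n :=
    (pow_dvd_pow_iff hπ.ne_zero hπ.not_isUnit).1
      (hπ.pow_dvd_of_dvd_mul_right m hy ⟨x, h.symm⟩)
  obtain rfl : m = n := (hle hy h).antisymm (hle hx h.symm)
  exact ⟨rfl, mul_left_cancel₀ (pow_ne_zero m hπ.ne_zero) h⟩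

namespace GoldenInt

lemma toMod_two_eq_zero_iff {z : GoldenInt} : toMod 2 z = 0 ↔ 2 ∣ z := toMod_eq_zero_iff

lemma toMod_two_of_odd {m : ℤ} (hm : Odd m) : toMod 2 (m : GoldenInt) = 1 := by
  obtain ⟨l, rfl⟩ := hm
  rw [Int.cast_add, Int.cast_mul, Int.cast_one, Int.cast_ofNat, map_add, map_one,
    toMod_two_eq_zero_iff.2 (dvd_mul_right _ _), zero_add]

lemma exists_eq_add_two_mul {x y : GoldenInt} (h : toMod 2 x = toMod 2 y) : ∃ a, x = y + 2 * a := by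
  obtain ⟨a, ha⟩ := toMod_two_eq_zero_iff.1 (show toMod 2 (x - y) = 0 by rw [map_sub, h, sub_self])
  exact ⟨a, by linear_combination ha⟩

lemma eq_and_eq_of_two_pow_mul_eq {x y : GoldenInt} (hx : toMod 2 x ≠ 0) (hy : toMod 2 y ≠ 0)
    {m n : ℕ} (h : 2 ^ m * x = 2 ^ n * y) : m = n ∧ x = y :=
  eq_and_eq_of_pow_mul_eq_pow_mul prime_two (toMod_two_eq_zero_iff.not.1 hx)
    (toMod_two_eq_zero_iff.not.1 hy) h

lemma exists_eq_two_pow_mul {z : GoldenInt} (hz : z ≠ 0) :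
    ∃ n z', toMod 2 z' ≠ 0 ∧ z = 2 ^ n * z' := by
  obtain ⟨n, z', hz', h⟩ := WfDvdMonoid.max_power_factor hz prime_two.irreducible
  exact ⟨n, z', toMod_two_eq_zero_iff.not.2 hz', h⟩

namespace IsCoverPoint

variable {ε p q r s : GoldenInt}

lemma toMod_ne_zero_or (h : IsCoverPoint ε p q r s) : toMod 2 p ≠ 0 ∨ toMod 2 q ≠ 0 := by
  by_contra! h0
  exact prime_two.not_isUnit
    (h.isCoprime.isUnit_of_dvd' (toMod_two_eq_zero_iff.1 h0.1) (toMod_two_eq_zero_iff.1 h0.2))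

lemma toMod_eq (h : IsCoverPoint ε p q r s) (hε : ε = 1 ∨ ε = -1) :
    toMod 2 r = toMod 2 p + toMod 2 q ∧ toMod 2 s = toMod 2 p + (ω + 1) * toMod 2 q := by
  have h3 := congrArg (toMod 2) h.sq_sub_three_mul_sq
  have hω := congrArg (toMod 2) h.sq_sub_omega_add_two_mul_sq
  have hε' : toMod 2 ε = 1 := by rcases hε with rfl | rfl <;> decide
  simp only [map_mul, map_sub, map_add, map_pow, map_ofNat, toMod_omega, hε'] at h3 hω
  generalize toMod 2 p = p, toMod 2 q = q, toMod 2 r = r, toMod 2 s = s at *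
  constructor
  · clear hω; revert p q r; decide
  · clear h3; revert p q s; decide

lemma toMod_eq_of_one (h : IsCoverPoint 1 p q r s) (hq : toMod 2 q ≠ 0) :
    ∃ p', p = 2 * p' ∧ toMod 2 p' = toMod 2 q ∧ toMod 2 r = toMod 2 q ∧
      toMod 2 s = (ω + 1) * toMod 2 q := by
  obtain ⟨hr, hs⟩ := h.toMod_eq (.inl rfl)
  obtain ⟨a, ha⟩ := exists_eq_add_two_mul (y := p + q) (by rw [hr, map_add])
  have hpq : (2 : GoldenInt) ∣ p * q := ⟨-q ^ 2 - a * (p + q) - a ^ 2, mul_left_cancel₀ two_ne_zero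
    (by have := h.3; rw [ha] at this; linear_combination -this)⟩
  have hp := (prime_two.dvd_or_dvd hpq).resolve_right (toMod_two_eq_zero_iff.not.1 hq)
  rw [toMod_two_eq_zero_iff.2 hp, zero_add] at hr hs
  obtain ⟨p', rfl⟩ := hp
  refine ⟨p', rfl, ?_, hr, hs⟩
  obtain ⟨a, rfl⟩ := exists_eq_add_two_mul hr
  obtain ⟨b, rfl⟩ := exists_eq_add_two_mul (y := (ω + 1) * q) (by simpa using hs)
  have h3 : p' ^ 2 = q ^ 2 + q * a + a ^ 2 := mul_left_cancel₀ (pow_ne_zero 2 prime_two.ne_zero)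
    (by linear_combination h.3)
  have hω : p' ^ 2 = (ω + 1) * q ^ 2 + (ω + 1) * q * b + b ^ 2 :=
    mul_left_cancel₀ (pow_ne_zero 2 prime_two.ne_zero)
    (by linear_combination h.4 + q ^ 2 * omega_sq (R := ℤ))
  replace h3 := congrArg (toMod 2) h3
  replace hω := congrArg (toMod 2) hω
  simp only [map_mul, map_add, map_pow, map_one, toMod_omega] at h3 hω
  generalize toMod 2 p' = p, toMod 2 q = q, toMod 2 a = a, toMod 2 b = b at *
  clear * - hq h3 hω
  revert p q a b; decide

lemma toMod_eq_of_neg_one (h : IsCoverPoint (-1) p q r s) :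
    toMod 2 q ≠ 0 ∧ toMod 2 p = ω * toMod 2 q ∧ toMod 2 r = (ω + 1) * toMod 2 q ∧
      toMod 2 s = toMod 2 q := by
  obtain ⟨hr, hs⟩ := h.toMod_eq (.inr rfl)
  obtain ⟨a, ha⟩ := exists_eq_add_two_mul (y := p + q) (by simpa using hr)
  obtain ⟨b, hb⟩ := exists_eq_add_two_mul (y := p + (ω + 1) * q) (by simpa using hs)
  have h3 : toMod 2 (p ^ 2 - q ^ 2 + p * q) = 0 := toMod_two_eq_zero_iff.2
    ⟨-a * (p + q) - a ^ 2, mul_left_cancel₀ two_ne_zero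
      (by have := h.3; rw [ha] at this; linear_combination this)⟩
  have hω : toMod 2 (p ^ 2 + (ω + 1) * p * q + ω * q ^ 2) = 0 := toMod_two_eq_zero_iff.2
    ⟨-b * (p + (ω + 1) * q) - b ^ 2, mul_left_cancel₀ two_ne_zero
      (by have := h.4; rw [hb] at this; linear_combination this - q ^ 2 * omega_sq (R := ℤ))⟩
  have h0 := h.toMod_ne_zero_or
  simp only [map_mul, map_add, map_sub, map_pow, map_one, toMod_omega] at h3 hω
  generalize toMod 2 p = p, toMod 2 q = q, toMod 2 r = r, toMod 2 s = s at *
  subst hr hs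
  clear * - h0 h3 hω
  revert p q; decide

lemma toMod_quartic_form (p q : GoldenInt) :
    toMod 2 (p ^ 4 - 3 * (ω + 2) * q ^ 4) = toMod 2 p ^ 4 + ω * toMod 2 q ^ 4 := by
  simp only [map_sub, map_mul, map_add, map_pow, map_ofNat, toMod_omega]
  generalize toMod 2 p = p, toMod 2 q = q
  revert p q; decide

section Halving

variable {k : ℕ} {p q₀ p' q' r' s' : GoldenInt} (hp : toMod 2 p ≠ 0) (hq₀ : toMod 2 q₀ ≠ 0)
  (h : 2 * p * (p' * q' * r' * s') = 2 ^ (k + 1) * q₀ * (p' ^ 4 - 3 * (ω + 2) * q' ^ 4))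
include hp hq₀ h

lemma toMod_eq_of_halving_odd (h' : IsCoverPoint 1 p' q' r' s') (hq' : toMod 2 q' ≠ 0) :
    toMod 2 p = (ω + 1) * toMod 2 q₀ := by
  obtain ⟨p₁, rfl, hp₁, hr, hs⟩ := h'.toMod_eq_of_one hq'
  have hω : (ω : GoldenMod 2) ≠ 0 ∧ (ω + 1 : GoldenMod 2) ≠ 0 := by decide
  have hF := toMod_quartic_form (2 * p₁) q'
  rw [toMod_two_eq_zero_iff.2 (dvd_mul_right 2 p₁), zero_pow four_ne_zero, zero_add] at hF
  obtain ⟨-, heq⟩ := eq_and_eq_of_two_pow_mul_eq (m := 2) (n := k + 1)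
    (x := p * (p₁ * q' * r' * s')) (y := q₀ * ((2 * p₁) ^ 4 - 3 * (ω + 2) * q' ^ 4))
    (by simp [hp, hp₁, hr, hs, hq', hω]) (by simp [-map_sub, hF, hq₀, hq', hω])
    (by linear_combination h)
  replace heq := congrArg (toMod 2) heq
  rw [map_mul, map_mul _ q₀, hF] at heq
  simp only [map_mul, hp₁, hr, hs] at heq
  generalize toMod 2 p = p, toMod 2 q₀ = q₀, toMod 2 q' = q at *
  clear * - heq hq'
  revert p q₀ q; decide

lemma exists_lt_toMod_mul_eq_of_halving_even (h' : IsCoverPoint 1 p' q' r' s')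
    (hq' : toMod 2 q' = 0) :
    ∃ j < k, ∃ q₁, toMod 2 q₁ ≠ 0 ∧ q' = 2 ^ (j + 1) * q₁ ∧
      toMod 2 p * toMod 2 q₁ = toMod 2 q₀ * toMod 2 p' := by
  have hp' := h'.toMod_ne_zero_or.resolve_right (· hq')
  obtain ⟨hr, hs⟩ := h'.toMod_eq (.inl rfl)
  rw [hq', mul_zero, add_zero] at hs
  rw [hq', add_zero] at hr
  obtain ⟨n, q₁, hq₁, hn⟩ := exists_eq_two_pow_mul h'.ne_zero
  obtain ⟨j, rfl⟩ : ∃ j, n = j + 1 := Nat.exists_eq_succ_of_ne_zero (by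
    rintro rfl; rw [hn, pow_zero, one_mul] at hq'; exact hq₁ hq')
  have hF := toMod_quartic_form p' q'
  rw [hq', zero_pow four_ne_zero, mul_zero, add_zero] at hF
  obtain ⟨hjk, heq⟩ := eq_and_eq_of_two_pow_mul_eq (m := j + 2) (n := k + 1)
    (x := p * (p' * q₁ * r' * s')) (y := q₀ * (p' ^ 4 - 3 * (ω + 2) * q' ^ 4))
    (by simp [hp, hp', hr, hs, hq₁]) (by simp [-map_sub, hF, hq₀, hp'])
    (by linear_combination h - 2 * p * p' * r' * s' * hn)
  refine ⟨j, by omega, q₁, hq₁, hn, mul_left_cancel₀ (pow_ne_zero 3 hp') ?_⟩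
  replace heq := congrArg (toMod 2) heq
  rw [map_mul _ q₀, hF] at heq
  simp only [map_mul, hr, hs] at heq
  linear_combination heq

omit hq₀ in
lemma not_isCoverPoint_neg_one_of_halving : ¬IsCoverPoint (-1) p' q' r' s' := fun h' => by
  obtain ⟨hq', hp', hr, hs⟩ := h'.toMod_eq_of_neg_one
  have hω : (ω : GoldenMod 2) ≠ 0 ∧ (ω + 1 : GoldenMod 2) ≠ 0 := by decide
  have hF : toMod 2 (p' ^ 4 - 3 * (ω + 2) * q' ^ 4) = 0 := by
    rw [toMod_quartic_form, hp']
    generalize toMod 2 q' = q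
    revert q; decide
  have h0 : p * (p' * q' * r' * s') = 2 ^ k * q₀ * (p' ^ 4 - 3 * (ω + 2) * q' ^ 4) :=
    mul_left_cancel₀ two_ne_zero (by linear_combination h)
  have := congrArg (toMod 2) h0
  rw [map_mul, map_mul _ (2 ^ k * q₀), hF, mul_zero] at this
  simp [hp, hp', hq', hr, hs, hω] at this

end Halving

theorem toMod_eq_of_even {k : ℕ} : ∀ {p q₀ r s : GoldenInt},
    IsCoverPoint 1 p (2 ^ (k + 1) * q₀) r s → toMod 2 q₀ ≠ 0 →
    toMod 2 p = (ω + 1) * toMod 2 q₀ := by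
  induction k using Nat.strong_induction_on with | _ k ih
  intro p q₀ r s h hq₀
  have hp : toMod 2 p ≠ 0 := h.toMod_ne_zero_or.resolve_right (· (toMod_two_eq_zero_iff.2
    ⟨2 ^ k * q₀, by ring⟩))
  obtain ⟨ε, p', q', r', s', rfl | rfl, h', hrel⟩ := h.exists_halving
  · by_cases hq' : toMod 2 q' = 0
    · obtain ⟨j, hjk, q₁, hq₁, rfl, heq⟩ :=
        exists_lt_toMod_mul_eq_of_halving_even hp hq₀ hrel h' hq'
      refine mul_right_cancel₀ hq₁ ?_
      rw [heq, ih j hjk h' hq₁]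
      ring
    · exact toMod_eq_of_halving_odd hp hq₀ hrel h' hq'
  · exact absurd h' (not_isCoverPoint_neg_one_of_halving hp hrel)

end IsCoverPoint

lemma exists_intCast_eq_two_pow_mul {m : ℤ} (hm : m ≠ 0) :
    ∃ j m', toMod 2 m' = 1 ∧ (m : GoldenInt) = 2 ^ j * m' := by
  obtain ⟨j, m', hm', rfl⟩ := WfDvdMonoid.max_power_factor hm Int.prime_two.irreducible
  exact ⟨j, m', toMod_two_of_odd (Int.not_even_iff_odd.1 (mt even_iff_two_dvd.1 hm')),
    by push_cast; rfl⟩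

/-- The `2`-adic leading coefficient of `2 e / m` is `ω`, while that of `p / q` is `1` or
`ω + 1`. -/
lemma IsCoverPoint.mul_intCast_ne {p q r s e : GoldenInt} (h : IsCoverPoint 1 p q r s)
    (he : toMod 2 e = ω) {m : ℤ} (hm : m ≠ 0) : p * m ≠ 2 * e * q := by
  intro heq
  have hω : (ω : GoldenMod 2) ≠ 0 ∧ (ω + 1 : GoldenMod 2) ≠ 0 := by decide
  obtain ⟨j, m, hm, hj⟩ := exists_intCast_eq_two_pow_mul hm
  obtain ⟨k, q₀, hq₀, rfl⟩ := exists_eq_two_pow_mul h.ne_zero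
  rw [hj] at heq
  cases k with
  | zero =>
    obtain ⟨p, rfl, hp, -⟩ := h.toMod_eq_of_one (by simpa using hq₀)
    rw [pow_zero, one_mul] at *
    obtain ⟨-, heq⟩ := eq_and_eq_of_two_pow_mul_eq (m := j) (n := 0) (x := p * m) (y := e * q₀)
      (by simp [hp, hm, hq₀]) (by simp [he, hω, hq₀])
      (mul_left_cancel₀ two_ne_zero (by linear_combination heq))
    replace heq := congrArg (toMod 2) heq
    simp only [map_mul, hp, hm, he] at heq
    generalize toMod 2 q₀ = q at *
    clear * - hq₀ heq
    revert q; decide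
  | succ k =>
    have hp := toMod_eq_of_even h hq₀
    obtain ⟨-, heq⟩ := eq_and_eq_of_two_pow_mul_eq (m := j) (n := k + 2) (x := p * m)
      (y := e * q₀) (by simp [hp, hm, hq₀, hω]) (by simp [he, hω, hq₀])
      (by linear_combination heq)
    replace heq := congrArg (toMod 2) heq
    simp only [map_mul, hp, hm, he] at heq
    generalize toMod 2 q₀ = q at *
    clear * - hq₀ heq
    revert q; decide

/-! ### The quartic form and its resolvent -/

/-- The quartic form defining the curve `y² = -M⁴ + (18 - 8ω) M² + (8ω - 13)` at `M = p / q`. -/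
def quarticForm (p q : GoldenInt) : GoldenInt :=
  -p ^ 4 + (18 - 8 * ω) * p ^ 2 * q ^ 2 + (8 * ω - 13) * q ^ 4

/-- `N` is a root of the quadratic `N² - 4 (p² + ω q²) N + 3 (ω + 2) (p² - q²)²`, whose discriminant
is `4 ω⁴` times the quartic form. -/
def IsResolventRoot (p q N : GoldenInt) : Prop :=
  N ^ 2 = 4 * (p ^ 2 + ω * q ^ 2) * N - 3 * (ω + 2) * (p ^ 2 - q ^ 2) ^ 2

lemma sq_add_one_ne_four_mul (z w : GoldenInt) : z ^ 2 + 1 ≠ 4 * w := by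
  intro h
  replace h := congrArg (toMod 4) h
  simp only [map_add, map_mul, map_pow, map_one, map_ofNat] at h
  generalize toMod 4 z = z, toMod 4 w = w at h
  revert z w; decide

lemma sq_ne_quarticForm_of_even_left (z a b : GoldenInt) :
    z ^ 2 ≠ quarticForm (2 * a) (2 * b + 1) := fun h =>
  sq_add_one_ne_four_mul z (-4 * a ^ 4 + (18 - 8 * ω) * a ^ 2 * (2 * b + 1) ^ 2 +
    (2 * ω - 3) * (2 * b + 1) ^ 4 - 4 * b ^ 4 - 8 * b ^ 3 - 6 * b ^ 2 - 2 * b)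
    (by rw [h, quarticForm]; ring)

lemma sq_ne_quarticForm_of_even_right (z a b : GoldenInt) :
    z ^ 2 ≠ quarticForm (2 * a + 1) (2 * b) := fun h =>
  sq_add_one_ne_four_mul z (-4 * a ^ 4 - 8 * a ^ 3 - 6 * a ^ 2 - 2 * a +
    (18 - 8 * ω) * (2 * a + 1) ^ 2 * b ^ 2 + 4 * (8 * ω - 13) * b ^ 4)
    (by rw [h, quarticForm]; ring)

lemma odd_and_odd_of_quarticForm {p q : ℤ} (hpq : IsCoprime p q) {z : GoldenInt}
    (h : z ^ 2 = quarticForm p q) : Odd p ∧ Odd q := by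
  rcases Int.even_or_odd' p with ⟨a, rfl | rfl⟩ <;> rcases Int.even_or_odd' q with ⟨b, rfl | rfl⟩
  · exact absurd (hpq.isUnit_of_dvd' (dvd_mul_right 2 a) (dvd_mul_right 2 b)) (by decide)
  · push_cast at h
    exact (sq_ne_quarticForm_of_even_left z a b h).elim
  · push_cast at h
    exact (sq_ne_quarticForm_of_even_right z a b h).elim
  · exact ⟨odd_two_mul_add_one a, odd_two_mul_add_one b⟩

lemma exists_add_eight_mul_sq_eq {b t f : GoldenInt} (hb : toMod 2 b ≠ 0)
    (h : f ^ 2 = b ^ 2 + 16 * t) : ∃ x, (b + 8 * x) ^ 2 = f ^ 2 := by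
  have hfb : toMod 2 f = toMod 2 b := by
    replace h := congrArg (toMod 2) h
    simp only [map_add, map_mul, map_pow, map_ofNat] at h
    generalize toMod 2 f = f, toMod 2 b = b, toMod 2 t = t at h
    clear hb; revert f b t; decide
  obtain ⟨g, rfl⟩ := exists_eq_add_two_mul hfb
  have hg : g * (g + b) = 2 ^ 2 * t :=
    mul_left_cancel₀ (pow_ne_zero 2 prime_two.ne_zero) (by linear_combination h)
  by_cases hg2 : (2 : GoldenInt) ∣ g
  · obtain ⟨x, rfl⟩ := prime_two.pow_dvd_of_dvd_mul_right 2
      (fun h => hb (toMod_two_eq_zero_iff.2 ((dvd_add_right hg2).1 h))) ⟨t, hg⟩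
    exact ⟨x, by ring⟩
  · obtain ⟨x, hx⟩ := prime_two.pow_dvd_of_dvd_mul_left 2 hg2 ⟨t, hg⟩
    exact ⟨-x, by rw [eq_sub_of_add_eq hx]; ring⟩

lemma exists_mul_sq_eq_of_quarticForm {p q z k : GoldenInt} (hq : toMod 2 q = 1)
    (hk : p ^ 2 = q ^ 2 + 8 * k) (h : z ^ 2 = quarticForm p q) :
    ∃ x, x * q ^ 2 = (2 - ω) * k * q ^ 2 - k ^ 2 - 4 * x ^ 2 := by
  have hz : z ^ 2 = 2 * (2 * (q ^ 4 + 16 * ((2 - ω) * k * q ^ 2 - k ^ 2))) := by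
    unfold quarticForm at h
    grind
  obtain ⟨f, rfl⟩ := prime_two.dvd_of_dvd_pow ⟨_, hz⟩
  have hf : f ^ 2 = (q ^ 2) ^ 2 + 16 * ((2 - ω) * k * q ^ 2 - k ^ 2) :=
    mul_left_cancel₀ (pow_ne_zero 2 prime_two.ne_zero) (by linear_combination hz)
  obtain ⟨x, hx⟩ := exists_add_eight_mul_sq_eq (by simp [hq]) hf
  exact ⟨x, mul_left_cancel₀ (pow_ne_zero 4 prime_two.ne_zero) (by linear_combination hx + hf)⟩

lemma isResolventRoot_four_mul {p q k x : GoldenInt} (hp : p ^ 2 = q ^ 2 + 8 * k)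
    (hx : x * q ^ 2 = (2 - ω) * k * q ^ 2 - k ^ 2 - 4 * x ^ 2) :
    IsResolventRoot p q (4 * (ω ^ 2 * q ^ 2 + 4 * (k + ω ^ 2 * x))) := by
  unfold IsResolventRoot
  have := omega_sq (R := ℤ)
  grind

lemma exists_isResolventRoot_of_sq_eq {p q z b k : GoldenInt} (hq : q ^ 2 = 1 + 8 * b)
    (hp : p ^ 2 = q ^ 2 + 8 * k) (hk : toMod 2 k = 0 ∨ toMod 2 k = 1)
    (h : z ^ 2 = quarticForm p q) :
    ∃ P, (toMod 8 P = ω ^ 2 ∨ toMod 8 P = 5 * ω ^ 2) ∧ IsResolventRoot p q (4 * P) := by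
  have hq2 : toMod 2 q = 1 := by
    replace hq := congrArg (toMod 2) hq
    simp only [map_add, map_mul, map_pow, map_one, map_ofNat] at hq
    generalize toMod 2 q = q, toMod 2 b = b at hq ⊢
    revert q b; decide
  obtain ⟨x, hx⟩ := exists_mul_sq_eq_of_quarticForm hq2 hp h
  have hxk : toMod 2 x = toMod 2 (ω ^ 2 * k) := by
    replace hx := congrArg (toMod 2) hx
    simp only [map_sub, map_mul, map_pow, map_ofNat, toMod_omega, hq2] at hx ⊢
    generalize toMod 2 x = x, toMod 2 k = k at hx hk ⊢
    revert x k; decide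
  refine ⟨_, ?_, isResolventRoot_four_mul hp hx⟩
  obtain ⟨y, rfl⟩ := exists_eq_add_two_mul hxk
  obtain ⟨a, rfl⟩ | ⟨a, rfl⟩ : (∃ a, k = 0 + 2 * a) ∨ ∃ a, k = 1 + 2 * a :=
    hk.imp (fun hk => exists_eq_add_two_mul (by rw [hk, map_zero]))
      fun hk => exists_eq_add_two_mul (by rw [hk, map_one])
  all_goals
    rw [hq]
    simp only [map_add, map_mul, map_pow, map_zero, map_one, map_ofNat, toMod_omega]
    generalize toMod 8 a = a, toMod 8 b = b, toMod 8 y = y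
    have h8 : (8 : GoldenMod 8) = 0 := by decide
    have hω := omega_sq (R := ZMod 8)
  · left
    grind
  · right
    grind

theorem exists_isResolventRoot {p q : ℤ} (hp : Odd p) (hq : Odd q) {z : GoldenInt}
    (h : z ^ 2 = quarticForm p q) :
    ∃ P, (toMod 8 P = ω ^ 2 ∨ toMod 8 P = 5 * ω ^ 2) ∧ IsResolventRoot p q (4 * P) := by
  obtain ⟨b, hb⟩ := Int.eight_dvd_sq_sub_one_of_odd hq
  obtain ⟨k, hk⟩ : 8 ∣ p ^ 2 - q ^ 2 := by
    simpa using dvd_sub (Int.eight_dvd_sq_sub_one_of_odd hp) (Int.eight_dvd_sq_sub_one_of_odd hq)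
  refine exists_isResolventRoot_of_sq_eq (b := b) (k := k) ?_ ?_ ?_ h
  · exact_mod_cast eq_add_of_sub_eq' hb
  · exact_mod_cast eq_add_of_sub_eq' hk
  · obtain ⟨a, rfl | rfl⟩ := Int.even_or_odd' k
    · exact .inl (toMod_two_eq_zero_iff.2 ⟨a, by push_cast; rfl⟩)
    · exact .inr (toMod_two_of_odd (odd_two_mul_add_one a))

/- The line of slope `2ω / (M - 1) + 2ω - 2` through the point `(9 - 3ω, 12ω - 21)` of
`Y² = X (X - 3) (X - (ω + 2))`, where `M = p / q`, meets the curve in two further points, whose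
first coordinates are the numbers `N / (p - q)²`. -/
lemma IsResolventRoot.exists_cubic {p q N : GoldenInt} (hN : IsResolventRoot p q N) :
    ∃ Y, Y ^ 2 = N * (N - 3 * (p - q) ^ 2) * (N - (ω + 2) * (p - q) ^ 2) := by
  refine ⟨(2 * ω * q + (2 * ω - 2) * (p - q)) * (N - (9 - 3 * ω) * (p - q) ^ 2)
      - (21 - 12 * ω) * (p - q) ^ 3, ?_⟩
  unfold IsResolventRoot at hN
  have := omega_sq (R := ℤ)
  grind

lemma IsResolventRoot.mul_eq_neg_sq {p q N : GoldenInt} (hN : IsResolventRoot p q N) :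
    (N - 3 * (p - q) ^ 2) * (N - 3 * (p + q) ^ 2) =
      -((3 * ω - 3) * (p ^ 2 - q ^ 2) + (2 - ω) * N) ^ 2 := by
  unfold IsResolventRoot at hN
  have := omega_sq (R := ℤ)
  grind

lemma eq_one_of_sq_eq_mul {d f P : GoldenInt} (hP : toMod 8 P = ω ^ 2 ∨ toMod 8 P = 5 * ω ^ 2)
    (hd : d ∈ torsionReps) (h : f ^ 2 = d * P) : d = 1 := by
  replace h := congrArg (toMod 8) h
  rw [map_pow, map_mul] at h
  rcases hd with rfl | rfl | rfl | rfl
  · rfl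
  all_goals
    simp only [map_add, map_mul, map_ofNat, toMod_omega] at h
    generalize toMod 8 f = f, toMod 8 P = P at h hP
    obtain rfl | rfl := hP <;> revert f <;> decide

lemma map_castHom_toMod {m n : ℕ} (h : m ∣ n) (z : GoldenInt) :
    map (ZMod.castHom h (ZMod m)) (toMod n z) = toMod m z := by
  ext <;> simp [toMod]

lemma toMod_two_eq_omega_of_sq {e : GoldenInt}
    (he : toMod 8 (e ^ 2) = ω ^ 2 ∨ toMod 8 (e ^ 2) = 5 * ω ^ 2) : toMod 2 e = ω := by
  have h : toMod 2 e ^ 2 = ω ^ 2 ∨ toMod 2 e ^ 2 = 5 * ω ^ 2 := by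
    rw [← map_pow, ← map_castHom_toMod (by norm_num : 2 ∣ 8)]
    exact he.imp (fun he => by rw [he, map_pow, map_omega])
      fun he => by rw [he, map_mul, map_pow, map_ofNat, map_omega]
  generalize toMod 2 e = e at h ⊢
  revert e; decide

lemma exists_eq_two_mul_of_four_mul_eq {P d : GoldenInt} {n : GoldenField}
    (hP : toMod 8 P = ω ^ 2 ∨ toMod 8 P = 5 * ω ^ 2) (hd : d ∈ torsionReps)
    (h : 4 * (P : GoldenField) = d * n ^ 2) :
    d = 1 ∧ ∃ e : GoldenInt, toMod 2 e = ω ∧ n = 2 * e := by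
  obtain ⟨f, hf⟩ := exists_coe_eq_of_sq_eq_coe (x := d * n / 2) (r := d * P)
    (by push_cast; linear_combination (-d / 4 : GoldenField) * h)
  have hfP : f ^ 2 = d * P :=
    coe_injective (by push_cast; rw [hf]; linear_combination (-d / 4 : GoldenField) * h)
  obtain rfl := eq_one_of_sq_eq_mul hP hd hfP
  rw [one_mul] at hfP
  refine ⟨rfl, f, toMod_two_eq_omega_of_sq (hfP ▸ hP), ?_⟩
  rw [hf]; push_cast; ring

lemma cubic_ne_zero {P m : GoldenInt} (hP : toMod 8 P = ω ^ 2 ∨ toMod 8 P = 5 * ω ^ 2) :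
    4 * P * (4 * P - 3 * m ^ 2) * (4 * P - (ω + 2) * m ^ 2) ≠ 0 := by
  have hd {d : GoldenInt} (hd : d ∈ torsionReps) (hd1 : d ≠ 1) : 4 * P - d * m ^ 2 ≠ 0 := fun h =>
    hd1 (exists_eq_two_mul_of_four_mul_eq (n := m) hP hd
      (by exact_mod_cast congrArg ((↑) : GoldenInt → GoldenField) (sub_eq_zero.1 h))).1
  refine mul_ne_zero (mul_ne_zero (mul_ne_zero (by decide) ?_)
    (hd (by simp [torsionReps]) (by decide))) (hd (by simp [torsionReps]) (by decide))
  rintro rfl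
  rw [map_zero] at hP
  revert hP; decide

section ResolventRoot

variable {p q P : GoldenInt} (hN : IsResolventRoot p q (4 * P)) (hpq : p - q ≠ 0)
  (hP : toMod 8 P = ω ^ 2 ∨ toMod 8 P = 5 * ω ^ 2)
include hN hpq hP

lemma IsResolventRoot.exists_eq_sq : ∃ e, toMod 2 e = ω ∧ P = e ^ 2 := by
  obtain ⟨Y, hY⟩ := hN.exists_cubic
  have hm : (p - q : GoldenField) ≠ 0 := by exact_mod_cast hpq
  have hY0 : (Y : GoldenField) ≠ 0 := by
    have : Y ^ 2 ≠ 0 := hY ▸ cubic_ne_zero hP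
    exact_mod_cast ne_zero_pow two_ne_zero this
  replace hY := congrArg ((↑) : GoldenInt → GoldenField) hY
  push_cast at hY
  obtain ⟨d, hd, n, hn⟩ := exists_eq_mul_sq_of_curve (x := 4 * P / (p - q) ^ 2)
    (y := Y / (p - q) ^ 3) (div_ne_zero hY0 (pow_ne_zero _ hm)) (by rw [div_pow, hY]; field_simp)
  rw [div_eq_iff (pow_ne_zero 2 hm), mul_assoc, ← mul_pow] at hn
  obtain ⟨rfl, e, he, hne⟩ := exists_eq_two_mul_of_four_mul_eq hP hd hn
  refine ⟨e, he, coe_injective ?_⟩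
  rw [hne] at hn
  push_cast at hn ⊢
  linear_combination hn / 4

lemma IsResolventRoot.exists_isCoverPoint :
    ∃ ε p' q' r' s' e : GoldenInt, (ε = 1 ∨ ε = -1) ∧ IsCoverPoint ε p' q' r' s' ∧
      toMod 2 e = ω ∧ P = e ^ 2 ∧ p' * (p - q) = 2 * e * q' := by
  obtain ⟨e, he, rfl⟩ := hN.exists_eq_sq hpq hP
  obtain ⟨Y, hY⟩ := hN.exists_cubic
  have hm : (p - q : GoldenField) ≠ 0 := by exact_mod_cast hpq
  have hY0 : Y ^ 2 ≠ 0 := hY ▸ cubic_ne_zero hP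
  have he0 : (e : GoldenField) ≠ 0 := by
    have : e ≠ 0 := by
      rintro rfl
      exact absurd he (by decide)
    exact_mod_cast this
  replace hY := congrArg ((↑) : GoldenInt → GoldenField) hY
  push_cast at hY
  obtain ⟨ε, p', q', r', s', hε, h, ha, -⟩ := GoldenField.exists_isCoverPoint
    (a := 2 * e / (p - q)) (y := Y / (2 * e * (p - q) ^ 2))
    (div_ne_zero (by exact_mod_cast ne_zero_pow two_ne_zero hY0) (by simp [he0, hm])) (by
      rw [div_pow _ _ 2, div_pow _ _ 2, hY]; field_simp; ring)
  have hq' : (q' : GoldenField) ≠ 0 := by exact_mod_cast h.ne_zero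
  refine ⟨ε, p', q', r', s', e, hε, h, he, rfl, coe_injective ?_⟩
  rw [div_eq_div_iff hm hq'] at ha
  push_cast
  exact ha.symm

end ResolventRoot

theorem IsResolventRoot.exists_sub_eq_neg_sq {p q : ℤ} {P : GoldenInt}
    (hN : IsResolventRoot p q (4 * P)) (hpq : p ≠ q)
    (hP : toMod 8 P = ω ^ 2 ∨ toMod 8 P = 5 * ω ^ 2) :
    ∃ b ≠ 0, 4 * P - 3 * (p - q) ^ 2 = -b ^ 2 := by
  have hm : (p - q : GoldenInt) ≠ 0 := sub_ne_zero.2 (by exact_mod_cast hpq)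
  obtain ⟨ε, p', q', r', s', e, rfl | rfl, h, he, rfl, hpe⟩ := hN.exists_isCoverPoint hm hP
  · rw [← Int.cast_sub] at hpe
    exact absurd hpe (h.mul_intCast_ne he (sub_ne_zero.2 hpq))
  have hqb : q' ^ 2 * (4 * e ^ 2 - 3 * (p - q) ^ 2) = -((p - q) * r') ^ 2 := by
    linear_combination (p - q : GoldenInt) ^ 2 * h.sq_sub_three_mul_sq -
      (2 * e * q' + p' * (p - q)) * hpe
  obtain ⟨b, hb⟩ : q' ∣ (p - q) * r' := by
    rw [← IsIntegrallyClosed.pow_dvd_pow_iff two_ne_zero, ← dvd_neg, ← hqb]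
    exact dvd_mul_right _ _
  rw [hb] at hqb
  have hb' : 4 * e ^ 2 - 3 * (p - q) ^ 2 = -b ^ 2 :=
    mul_left_cancel₀ (pow_ne_zero 2 h.ne_zero) (by linear_combination hqb)
  refine ⟨b, ?_, hb'⟩
  rintro rfl
  refine cubic_ne_zero (m := (p - q : GoldenInt)) hP ?_
  rw [hb']; ring

lemma sq_ne_neg_sq {x y : GoldenInt} (hx : x ≠ 0) : x ^ 2 ≠ -y ^ 2 := by
  let f : GoldenField →+* ℝ := lift φ Real.goldenRatio_sq
  intro h
  have hfx : 0 < f x ^ 2 := by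
    have : (x : GoldenField) ≠ 0 := by exact_mod_cast hx
    exact sq_pos_of_ne_zero ((map_ne_zero f).2 this)
  have hf := congrArg (fun z : GoldenInt => f z) h
  push_cast at hf
  rw [map_neg, map_pow, map_pow] at hf
  linarith [sq_nonneg (f y)]

theorem sq_eq_sq_of_quarticForm {p q : ℤ} (hpq : IsCoprime p q) {z : GoldenInt}
    (h : z ^ 2 = quarticForm p q) : p ^ 2 = q ^ 2 := by
  by_contra hne
  rw [sq_eq_sq_iff_eq_or_eq_neg, not_or] at hne
  obtain ⟨hp, hq⟩ := odd_and_odd_of_quarticForm hpq h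
  obtain ⟨P, hP, hN⟩ := exists_isResolventRoot hp hq h
  have hN' : IsResolventRoot p (-q : ℤ) (4 * P) := by
    simpa only [IsResolventRoot, Int.cast_neg, neg_sq] using hN
  obtain ⟨b, hb0, hb⟩ := hN.exists_sub_eq_neg_sq hne.1 hP
  obtain ⟨c, hc0, hc⟩ := hN'.exists_sub_eq_neg_sq hne.2 hP
  rw [Int.cast_neg, sub_neg_eq_add] at hc
  have hbc := hN.mul_eq_neg_sq
  rw [hb, hc, neg_mul_neg, ← mul_pow] at hbc
  exact sq_ne_neg_sq (mul_ne_zero hb0 hc0) hbc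

end GoldenInt

/-! ### Passage from the real curve to the quartic form -/

section RealEmbedding

variable {β : ℝ} (hβ : β ^ 2 = β + 1)

lemma exists_lift_eq_of_mem_adjoin {Y : ℝ} (hY : Y ∈ IntermediateField.adjoin ℚ ({β} : Set ℝ)) :
    ∃ y : GoldenField, lift β hβ y = Y := by
  have h : IntermediateField.adjoin ℚ ({β} : Set ℝ) ≤
      (lift β hβ : GoldenField →+* ℝ).toRatAlgHom.fieldRange := by
    rw [IntermediateField.adjoin_simple_le_iff]
    exact ⟨ω, lift_omega hβ⟩
  exact h hY

include hβ in
lemma exists_goldenField_curve {X : ℚ} {Y : ℝ}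
    (hY : Y ∈ IntermediateField.adjoin ℚ ({β} : Set ℝ))
    (h : (X : ℝ) ^ 4 + (8 * β - 12) * X ^ 3 + (16 * β - 30) * X ^ 2 + (8 * β - 12) * X + 1
      = Y ^ 2) :
    ∃ y : GoldenField, (X : GoldenField) ^ 4 + (8 * ω - 12) * (X : GoldenField) ^ 3
      + (16 * ω - 30) * (X : GoldenField) ^ 2 + (8 * ω - 12) * (X : GoldenField) + 1 = y ^ 2 := by
  obtain ⟨y, rfl⟩ := exists_lift_eq_of_mem_adjoin hβ hY
  refine ⟨y, (lift β hβ : GoldenField →+* ℝ).injective ?_⟩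
  simpa only [map_add, map_sub, map_mul, map_pow, map_one, map_ofNat, map_ratCast, lift_omega]
    using h

end RealEmbedding

lemma sq_eq_one_of_quartic {M : ℚ} {y : GoldenField}
    (h : y ^ 2 = -(M : GoldenField) ^ 4 + (18 - 8 * ω) * (M : GoldenField) ^ 2 + (8 * ω - 13)) :
    M ^ 2 = 1 := by
  have hM : (M : GoldenField) * M.den = M.num := by exact_mod_cast M.mul_den_eq_num
  have hz : (y * (M.den : GoldenField) ^ 2) ^ 2 = (quarticForm M.num (M.den : ℤ) : GoldenInt) := by
    rw [quarticForm]
    push_cast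
    rw [← hM, mul_pow, h]
    ring
  obtain ⟨z, hzy⟩ := exists_coe_eq_of_sq_eq_coe hz
  have hnum : M.num ^ 2 = (M.den : ℤ) ^ 2 :=
    sq_eq_sq_of_quarticForm M.isCoprime_num_den (z := z)
      (coe_injective (by rw [← hz, ← hzy]; push_cast; rfl))
  rw [← M.num_div_den, div_pow, div_eq_one_iff_eq (by simp)]
  exact_mod_cast hnum

lemma eq_zero_of_goldenField_curve {X : ℚ} {y : GoldenField} (hX : X ≠ -1)
    (h : (X : GoldenField) ^ 4 + (8 * ω - 12) * (X : GoldenField) ^ 3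
      + (16 * ω - 30) * (X : GoldenField) ^ 2 + (8 * ω - 12) * (X : GoldenField) + 1 = y ^ 2) :
    X = 0 := by
  have hX1 : X + 1 ≠ 0 := mt eq_neg_of_add_eq_zero_left hX
  have hX1' : (X + 1 : GoldenField) ≠ 0 := by exact_mod_cast hX1
  have hM := sq_eq_one_of_quartic (M := (X - 1) / (X + 1)) (y := 2 * y / (X + 1) ^ 2) (by
    push_cast
    field_simp
    linear_combination -4 * h)
  rw [div_pow, div_eq_one_iff_eq (pow_ne_zero 2 hX1)] at hM
  linarith

/-- Lemma 6 of the paper: with `β = (1+√5)/2` and `L = ℚ(β) ⊆ ℝ`, the only solutions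
of `X⁴ + (8β-12)X³ + (16β-30)X² + (8β-12)X + 1 = Y²` with `X ∈ ℚ` and `Y ∈ L` are
`(X,Y) = (0, ±1)`. -/
theorem chabauty_curve_C3 (β : ℝ) (hβ : β = (1 + Real.sqrt 5) / 2)
    (X : ℚ) (Y : ℝ) (hY : Y ∈ IntermediateField.adjoin ℚ ({β} : Set ℝ)) :
    (X : ℝ) ^ 4 + (8 * β - 12) * (X : ℝ) ^ 3 + (16 * β - 30) * (X : ℝ) ^ 2
        + (8 * β - 12) * (X : ℝ) + 1 = Y ^ 2 ↔
      (X = 0 ∧ (Y = 1 ∨ Y = -1)) := by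
  constructor
  · intro h
    have hβ2 : β ^ 2 = β + 1 := hβ ▸ Real.goldenRatio_sq
    have hX : X ≠ -1 := by
      rintro rfl
      push_cast at h
      nlinarith [sq_nonneg Y]
    obtain ⟨y, hy⟩ := exists_goldenField_curve hβ2 hY h
    obtain rfl := eq_zero_of_goldenField_curve hX hy
    exact ⟨rfl, sq_eq_one_iff.1 (by simpa using h.symm)⟩
  · rintro ⟨rfl, rfl | rfl⟩ <;> norm_num
end

section
/- Let $n \ge 7$ be a prime. There is no primitive non-constant arithmetic progression of integers of the form $x_1^2, x_2^2, x_3^n, x_4^n, x_5^2, x_6^2$ (six terms, with exponent pattern $(2,2,n,n,2,2)$). -/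
/-!
Already the terms at positions `0, 1, 4, 5` of a non-constant arithmetic progression of rational
numbers cannot all be squares. Write them as `p², q², r², s²` with difference `d`, scaled so that
`p` and `q` are coprime integers; then `p, q, r, s` are odd. For a suitable sign of `s` the integer
`a = (qr + ps) / 2` is odd, and with `c = d / 2` the product `(a² + c²)(a² + 16c²)` is a square.

Such a pair with `c ≠ 0` is ruled out by descent on `|c|`. If `a` and `c` are coprime, both factors
are squares, and the two Pythagorean triples give `a = u² - v² = w² - z²`, `c = 2uv`, `4c = 2wz`.
Then `u² (w² + v²)(w² + 16v²) = (w (w² + v²))²`, so `(w, v)` is a pair of the same kind, and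
`|v| < |c|`.
-/

section Bezout

variable {R : Type*} [CommRing R] [IsDomain R] [IsBezout R]

lemma exists_isCoprime_eq_mul (x y : R) :
    ∃ g x' y', IsCoprime x' y' ∧ x = g * x' ∧ y = g * y' := by
  classical
  let := IsBezout.toGCDDomain R
  obtain ⟨x', y', hx, hy, hunit⟩ := extract_gcd x y
  exact ⟨_, x', y', (gcd_isUnit_iff x' y').mp hunit, hx, hy⟩

lemma exists_isCoprime_eq_mul_algebraMap {K : Type*} [Field K] [Algebra R K] [IsFractionRing R K]
    (x y : K) : ∃ (g : K) (x' y' : R),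
      IsCoprime x' y' ∧ x = g * algebraMap R K x' ∧ y = g * algebraMap R K y' := by
  obtain ⟨a, s, hs, rfl⟩ := IsFractionRing.div_surjective (A := R) x
  obtain ⟨b, t, ht, rfl⟩ := IsFractionRing.div_surjective (A := R) y
  obtain ⟨h, x', y', hcop, hx, hy⟩ := exists_isCoprime_eq_mul (a * t) (b * s)
  have hs0 := IsFractionRing.to_map_ne_zero_of_mem_nonZeroDivisors (K := K) hs
  have ht0 := IsFractionRing.to_map_ne_zero_of_mem_nonZeroDivisors (K := K) ht
  refine ⟨algebraMap R K h / (algebraMap R K s * algebraMap R K t), x', y', hcop, ?_, ?_⟩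
  · field_simp
    simpa only [map_mul] using congrArg (algebraMap R K) hx
  · field_simp
    simpa only [map_mul] using congrArg (algebraMap R K) hy

lemma exists_eq_mul_sq_of_isSquare_mul {x y : R} (hx : x ≠ 0) (hxy : IsSquare (x * y)) :
    ∃ t f g, x = t * f ^ 2 ∧ y = t * g ^ 2 := by
  obtain ⟨m, hm⟩ := hxy
  obtain ⟨h, f, g, hfg, rfl, rfl⟩ := exists_isCoprime_eq_mul x m
  have hfy : f * y = h * g ^ 2 :=
    mul_left_cancel₀ (left_ne_zero_of_mul hx) (by linear_combination hm)
  obtain ⟨t, rfl⟩ : f ∣ h := hfg.pow_right.dvd_of_dvd_mul_right ⟨y, hfy.symm⟩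
  exact ⟨t, f, g, by ring,
    mul_left_cancel₀ (right_ne_zero_of_mul hx) (by linear_combination hfy)⟩

end Bezout

lemma isSquare_of_isSquare_sq_mul {R : Type*} [CommRing R] [IsDomain R] [IsIntegrallyClosed R]
    {g x : R} (hg : g ≠ 0) (h : IsSquare (g ^ 2 * x)) : IsSquare x := by
  obtain ⟨m, hm⟩ := h
  obtain ⟨e, rfl⟩ : g ∣ m :=
    (IsIntegrallyClosed.pow_dvd_pow_iff two_ne_zero).mp ⟨x, by rw [hm, sq]⟩
  exact ⟨e, mul_left_cancel₀ (pow_ne_zero 2 hg) (by rw [hm]; ring)⟩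

lemma sq_emod_eight (x : ℤ) :
    x % 2 = 1 ∧ x ^ 2 % 8 = 1 ∨ x % 2 = 0 ∧ (x ^ 2 % 8 = 0 ∨ x ^ 2 % 8 = 4) := by
  rcases Int.even_or_odd x with ⟨y, rfl⟩ | hx
  · have hsq : (y + y) ^ 2 = 4 * y ^ 2 := by ring
    omega
  · have hx2 := Int.odd_iff.mp hx
    have hx8 := Int.eight_dvd_sq_sub_one_of_odd hx
    omega

lemma isSquare_factors_of_isSquare_quartic {a c : ℤ} (ha : Odd a) (hac : IsCoprime a c)
    (h : IsSquare ((a ^ 2 + c ^ 2) * (a ^ 2 + 16 * c ^ 2))) :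
    IsSquare (a ^ 2 + c ^ 2) ∧ IsSquare (a ^ 2 + 16 * c ^ 2) := by
  have hpos : 0 < a ^ 2 + c ^ 2 := by
    have : a ≠ 0 := by rintro rfl; simp at ha
    positivity
  obtain ⟨t, f, g, hf, hg⟩ := exists_eq_mul_sq_of_isSquare_mul hpos.ne' h
  -- `t` is a positive divisor of `15` congruent to `1` modulo `8`.
  suffices t = 1 by
    subst this
    exact ⟨⟨f, by rw [hf]; ring⟩, ⟨g, by rw [hg]; ring⟩⟩
  have ht_pos : 0 < t := pos_of_mul_pos_left (hf ▸ hpos) (sq_nonneg f)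
  have ht_dvd : t ∣ 15 := by
    obtain ⟨x, y, hxy⟩ := hac.pow (m := 2) (n := 2)
    exact ⟨x * (16 * f ^ 2 - g ^ 2) + y * (g ^ 2 - f ^ 2), by
      linear_combination (16 * x - y) * hf + (y - x) * hg - 15 * hxy⟩
  have ht_mod : t % 8 = 1 := by
    have ha8 := Int.eight_dvd_sq_sub_one_of_odd ha
    have hg_odd : Odd g := by
      have : Odd (t * g ^ 2) := by rw [← hg, Int.odd_iff]; omega
      exact (Int.odd_pow' two_ne_zero).mp (Int.odd_mul.mp this).2
    have htg : 8 ∣ t * (g ^ 2 - 1) := (Int.eight_dvd_sq_sub_one_of_odd hg_odd).mul_left t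
    rw [mul_sub, ← hg] at htg
    omega
  have ht_le := Int.le_of_dvd (by norm_num) ht_dvd
  interval_cases t <;> omega

lemma exists_eq_sq_sub_sq_of_isSquare_sq_add_sq {a c : ℤ} (ha : a % 4 = 1) (hac : IsCoprime a c)
    (h : IsSquare (a ^ 2 + c ^ 2)) : ∃ u v, Odd u ∧ a = u ^ 2 - v ^ 2 ∧ c = 2 * u * v := by
  obtain ⟨f, hf⟩ := h
  have hf0 : f ≠ 0 := by
    rintro rfl
    have : a ≠ 0 := by rintro rfl; simp at ha
    have : 0 < a ^ 2 + c ^ 2 := by positivity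
    omega
  obtain ⟨u, v, hau, hcuv, -⟩ := PythagoreanTriple.coprime_classification' (z := |f|)
    (by rw [PythagoreanTriple, abs_mul_abs_self]; linear_combination hf)
    (Int.isCoprime_iff_gcd_eq_one.mp hac) (by omega) (abs_pos.mpr hf0)
  have hu8 := sq_emod_eight u
  have hv8 := sq_emod_eight v
  exact ⟨u, v, Int.odd_iff.mpr (by omega), hau, hcuv⟩

lemma exists_natAbs_lt_of_isSquare_quartic {a c : ℤ} (ha : Odd a) (hac : IsCoprime a c)
    (hc : c ≠ 0) (h : IsSquare ((a ^ 2 + c ^ 2) * (a ^ 2 + 16 * c ^ 2))) :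
    ∃ w v : ℤ, Odd w ∧ v ≠ 0 ∧ v.natAbs < c.natAbs ∧
      IsSquare ((w ^ 2 + v ^ 2) * (w ^ 2 + 16 * v ^ 2)) := by
  wlog ha4 : a % 4 = 1 generalizing a
  · exact this ha.neg hac.neg_left (by simpa only [neg_sq] using h) (by grind)
  obtain ⟨hsq₁, hsq₁₆⟩ := isSquare_factors_of_isSquare_quartic ha hac h
  have hac4 : IsCoprime a (4 * c) :=
    ((Int.isCoprime_two_right.mpr ha).pow_right (n := 2)).mul_right hac
  obtain ⟨u, v, hu, hau, rfl⟩ := exists_eq_sq_sub_sq_of_isSquare_sq_add_sq ha4 hac hsq₁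
  obtain ⟨w, z, hw, haw, hwz⟩ :=
    exists_eq_sq_sub_sq_of_isSquare_sq_add_sq ha4 hac4 (by convert! hsq₁₆ using 2; ring)
  have hu0 : u ≠ 0 := by rintro rfl; simp at hu
  have hv0 : v ≠ 0 := right_ne_zero_of_mul hc
  refine ⟨w, v, hw, hv0, ?_, isSquare_of_isSquare_sq_mul hu0 ⟨w * (w ^ 2 + v ^ 2), ?_⟩⟩
  · have hu_pos := Int.natAbs_pos.mpr hu0
    have hv_pos := Int.natAbs_pos.mpr hv0
    simp only [Int.natAbs_mul, Int.reduceAbs]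
    nlinarith
  · have hwz' : w * z = 4 * (u * v) := by linarith
    linear_combination
      (w ^ 2 + v ^ 2) * (-(w * z + 4 * (u * v)) * hwz' + w ^ 2 * (haw - hau))

theorem eq_zero_of_isSquare_quartic {a c : ℤ} (ha : Odd a)
    (h : IsSquare ((a ^ 2 + c ^ 2) * (a ^ 2 + 16 * c ^ 2))) : c = 0 := by
  induction hN : c.natAbs using Nat.strong_induction_on generalizing a c with
  | _ N ih =>
  subst hN
  by_contra hc
  obtain ⟨g, a', c', hcop, rfl, rfl⟩ := exists_isCoprime_eq_mul a c
  obtain ⟨hg0, hc'⟩ := mul_ne_zero_iff.mp hc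
  have h' : IsSquare ((a' ^ 2 + c' ^ 2) * (a' ^ 2 + 16 * c' ^ 2)) :=
    isSquare_of_isSquare_sq_mul (pow_ne_zero 2 hg0) (by convert! h using 1; ring)
  obtain ⟨w, v, hw, hv0, hlt, hwv⟩ :=
    exists_natAbs_lt_of_isSquare_quartic (Int.odd_mul.mp ha).2 hcop hc' h'
  have hle : c'.natAbs ≤ (g * c').natAbs := by
    rw [Int.natAbs_mul]
    exact Nat.le_mul_of_pos_left _ (Int.natAbs_pos.mpr hg0)
  exact hv0 (ih _ (hlt.trans_le hle) hw hwv rfl)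

lemma quartic_eq_sq_of_squares_zero_one_four_five {R : Type*} [CommRing R] {p q r s d : R}
    (hq : q ^ 2 = p ^ 2 + d) (hr : r ^ 2 = p ^ 2 + 4 * d) (hs : s ^ 2 = p ^ 2 + 5 * d) :
    ((q * r + p * s) ^ 2 + d ^ 2) * ((q * r + p * s) ^ 2 + 16 * d ^ 2) =
      ((q * r + p * s) * (p ^ 2 + s ^ 2)) ^ 2 := by
  have hdiff : (q * r) ^ 2 = (p * s) ^ 2 + 4 * d ^ 2 := by
    rw [mul_pow, mul_pow, hq, hr, hs]; ring
  have hsum : (p ^ 2 + s ^ 2) ^ 2 = 4 * (p * s) ^ 2 + 25 * d ^ 2 := by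
    rw [mul_pow, hs]; ring
  linear_combination (2 * (q * r + p * s) ^ 2 - 4 * d ^ 2 - (q * r) ^ 2 + (p * s) ^ 2) * hdiff -
    (q * r + p * s) ^ 2 * hsum

section IntegerSquares

variable {p q r s d : ℤ}

lemma odd_of_squares_zero_one_four_five (hpq : IsCoprime p q) (hq : q ^ 2 = p ^ 2 + d)
    (hr : r ^ 2 = p ^ 2 + 4 * d) (hs : s ^ 2 = p ^ 2 + 5 * d) :
    Odd p ∧ Odd q ∧ Odd r ∧ Odd s := by
  have hp8 := sq_emod_eight p
  have hq8 := sq_emod_eight q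
  have hr8 := sq_emod_eight r
  have hs8 := sq_emod_eight s
  have hpq_even : ¬ (Even p ∧ Even q) := fun ⟨hp, hq⟩ ↦
    Int.prime_two.not_isUnit (hpq.isUnit_of_dvd' hp.two_dvd hq.two_dvd)
  simp only [Int.odd_iff, Int.even_iff] at *
  omega

lemma eq_zero_of_squares_zero_one_four_five (hpq : IsCoprime p q) (hq : q ^ 2 = p ^ 2 + d)
    (hr : r ^ 2 = p ^ 2 + 4 * d) (hs : s ^ 2 = p ^ 2 + 5 * d) : d = 0 := by
  obtain ⟨hp_odd, hq_odd, hr_odd, hs_odd⟩ := odd_of_squares_zero_one_four_five hpq hq hr hs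
  have hd : 2 ∣ d := by
    rw [← sub_eq_of_eq_add' hq]
    exact (hq_odd.pow.sub_odd hp_odd.pow).two_dvd
  -- The sum of `qr + ps` and `qr - ps` is `2qr`, so one of these even numbers is `2` modulo `4`.
  wlog hmod : (q * r + p * s) % 4 = 2 generalizing s
  · have hqr := Int.odd_iff.mp (hq_odd.mul hr_odd)
    have hps := Int.odd_iff.mp (hp_odd.mul hs_odd)
    exact this (s := -s) (by rwa [neg_sq]) hs_odd.neg (by rw [mul_neg]; omega)
  obtain ⟨a, ha⟩ : 2 ∣ q * r + p * s := by omega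
  obtain ⟨c, rfl⟩ := hd
  have hsq : IsSquare ((a ^ 2 + c ^ 2) * (a ^ 2 + 16 * c ^ 2)) := by
    refine isSquare_of_isSquare_sq_mul (g := 4) four_ne_zero ⟨2 * a * (p ^ 2 + s ^ 2), ?_⟩
    have hquartic := quartic_eq_sq_of_squares_zero_one_four_five hq hr hs
    rw [ha] at hquartic
    linear_combination hquartic
  rw [eq_zero_of_isSquare_quartic (Int.odd_iff.mpr (by omega)) hsq, mul_zero]

end IntegerSquares

theorem no_AP_22nn22_general {a d : ℚ} (hd : d ≠ 0) :
    ¬ (IsSquare a ∧ IsSquare (a + d) ∧ IsSquare (a + 4 * d) ∧ IsSquare (a + 5 * d)) := by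
  rintro ⟨⟨p, rfl⟩, ⟨q, hq⟩, hr, hs⟩
  obtain ⟨g, m, n, hmn, rfl, rfl⟩ := exists_isCoprime_eq_mul_algebraMap (R := ℤ) p q
  simp only [eq_intCast] at *
  obtain rfl : d = g ^ 2 * (n ^ 2 - m ^ 2) := by linear_combination hq
  have hg : g ≠ 0 := ne_zero_pow two_ne_zero (left_ne_zero_of_mul hd)
  have exists_sq_eq (k : ℤ) (h : IsSquare (g * m * (g * m) + k * (g ^ 2 * (n ^ 2 - m ^ 2)))) :
      ∃ x : ℤ, x ^ 2 = m ^ 2 + k * (n ^ 2 - m ^ 2) := by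
    have hcast : IsSquare (g ^ 2 * ((m ^ 2 + k * (n ^ 2 - m ^ 2) : ℤ) : ℚ)) := by
      convert! h using 1
      push_cast
      ring
    obtain ⟨x, hx⟩ := Rat.isSquare_intCast_iff.mp (isSquare_of_isSquare_sq_mul hg hcast)
    exact ⟨x, by rw [hx, sq]⟩
  obtain ⟨r, hr⟩ := exists_sq_eq 4 hr
  obtain ⟨s, hs⟩ := exists_sq_eq 5 hs
  refine right_ne_zero_of_mul hd ?_
  exact_mod_cast eq_zero_of_squares_zero_one_four_five hmn (by ring) hr hs

/-- For a prime `n ≥ 7`, there is no primitive non-constant arithmetic progression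
of integers of the form `x₁², x₂², x₃ⁿ, x₄ⁿ, x₅², x₆²`. -/
theorem no_AP_22nn22 (n : ℕ) (hn : n.Prime) (hn7 : 7 ≤ n) :
    ¬ ∃ (x₁ x₂ x₃ x₄ x₅ x₆ d : ℤ), d ≠ 0 ∧
      Int.gcd (x₁ ^ 2) (x₂ ^ 2) = 1 ∧
      x₂ ^ 2 - x₁ ^ 2 = d ∧
      x₃ ^ n - x₂ ^ 2 = d ∧
      x₄ ^ n - x₃ ^ n = d ∧
      x₅ ^ 2 - x₄ ^ n = d ∧
      x₆ ^ 2 - x₅ ^ 2 = d := by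
  rintro ⟨x₁, x₂, x₃, x₄, x₅, x₆, d, hd, -, h₁, h₂, h₃, h₄, h₅⟩
  refine no_AP_22nn22_general (a := x₁ ^ 2) (d := d) (mod_cast hd)
    ⟨.sq _, ⟨x₂, ?_⟩, ⟨x₅, ?_⟩, ⟨x₆, ?_⟩⟩ <;> norm_cast <;> linarith
end
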